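/- arXiv:1203.0042 — 2 statements merged into one kernel-verified Lean document; each statement's English description precedes it below -/
import Mathlib

section
/- Let μ ∈ ℂ∖{0} and η ∈ ℂ∖{0}. Every g ∈ V₂(μ) is a finite linear combination of functions of the form z ↦ f₁(z)·f₂(z+η) with f₁, f₂ ∈ V₁(μ). Consequently, for every c₂ ∈ V₂(μ) there exists an operator in 𝒱₂(μ) whose coefficient of the shift F ↦ F(·+2η) equals c₂. -/
open Complex Filter

noncomputable section

/-- The Jacobi theta function `θ₁(z|τ)`. -/
def θ (τ z : ℂ) : ℂ :=
  I * ∑' n : ℤ, (-1 : ℂ) ^ n * Complex.exp (Real.pi * I * τ * ((n : ℂ) - 1/2) ^ 2) *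
    Complex.exp (Real.pi * I * (2 * (n : ℂ) - 1) * z)

/-- `P_k(η,z) = ∏_{ℓ=0}^{k-1} θ(2z+2ℓη)`. -/
def Pk (τ η : ℂ) (k : ℕ) (z : ℂ) : ℂ :=
  ∏ ℓ ∈ Finset.range k, θ τ (2 * z + 2 * (ℓ : ℂ) * η)

/-- Membership in the space `V_k(μ)`. -/
def memVk (τ μ η : ℂ) (k : ℕ) (g : ℂ → ℂ) : Prop :=
  MeromorphicOn g Set.univ ∧ (∀ z, g (z + 1) = g z) ∧ (∀ z, g (z + τ) = μ ^ k * g z) ∧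
  ∃ h : ℂ → ℂ, Differentiable ℂ h ∧ ∀ z, Pk τ η k z ≠ 0 → g z * Pk τ η k z = h z

/-- A meromorphic function is regular at a point. -/
def RegularAt (g : ℂ → ℂ) (p : ℂ) : Prop :=
  ∃ h : ℂ → ℂ, AnalyticAt ℂ h p ∧ ∀ᶠ z in nhdsWithin p {p}ᶜ, g z = h z

/-- `g` has at most a simple pole at `p`, with residue `r`. -/
def SimplePoleAt (g : ℂ → ℂ) (p r : ℂ) : Prop :=
  ∃ h : ℂ → ℂ, AnalyticAt ℂ h p ∧ ∀ᶠ z in nhdsWithin p {p}ᶜ, g z = r / (z - p) + h z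

/-- `p` belongs to the half-lattice `Λ/2`. -/
def HalfLattice (τ p : ℂ) : Prop := ∃ m n : ℤ, p = ((m : ℂ) + τ * n) / 2

/-- Membership in `V₁(μ)`. -/
def memV1 (τ μ : ℂ) (f : ℂ → ℂ) : Prop :=
  MeromorphicOn f Set.univ ∧ (∀ z, f (z + 1) = f z) ∧ (∀ z, f (z + τ) = μ * f z) ∧
  (∀ p : ℂ, ¬ HalfLattice τ p → RegularAt f p) ∧
  (∀ p : ℂ, HalfLattice τ p → ∃ r : ℂ, SimplePoleAt f p r)

/-- The analytic difference operator `A(f)`. -/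
def ADO (η : ℂ) (f : ℂ → ℂ) : Module.End ℂ (ℂ → ℂ) where
  toFun F := fun z => f z * F (z + η) + f (-z) * F (z - η)
  map_add' F G := by funext z; simp [Pi.add_apply]; ring
  map_smul' c F := by funext z; simp [Pi.smul_apply, smul_eq_mul]; ring

/-- `𝒱_k(μ)`: the span of `k`-fold products of operators `A(f)`, `f ∈ V₁(μ)`. -/
def Vcal (τ μ η : ℂ) (k : ℕ) : Submodule ℂ (Module.End ℂ (ℂ → ℂ)) :=
  Submodule.span ℂ {T | ∃ f : Fin k → (ℂ → ℂ), (∀ i, memV1 τ μ (f i)) ∧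
    T = (List.ofFn fun i => ADO η (f i)).prod}

/-!
Multiplication by `θ(2z)` identifies `V₁(μ)` with a space of theta functions of degree four, and
multiplication by `P₂(η, z)` maps `V₂(μ)` into a space of theta functions of degree eight, so it is
enough that theta functions of degrees `m ≥ 2` and `n ≥ 3` with given multipliers `c` and `d` span,
through their products, all theta functions of degree `m + n` and multiplier `cd`. Choose a theta
function `D` of degree `m` and multiplier `c` with `m` distinct zeros modulo the lattice. As zeros
can be prescribed almost freely, for each zero of `D` there is a product `FG` that vanishes at all
the other zeros but not at this one. Subtracting a combination of such products from a given theta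
function of degree `m + n` leaves one that vanishes at the zeros of `D`, hence of the form `DH` with
`H` of degree `n` and multiplier `d`.

Theta functions with prescribed zeros are built from the product side of the Jacobi triple product.
The triple product identity itself is only needed up to a nonzero constant: the series vanishes at
a point of the right class, so its quotient by the product is entire and elliptic, hence constant by
Liouville's theorem, and the constant is nonzero because the series has zeroth Fourier coefficient
one.
-/

section

open scoped Real Topology

/-! ### Entire functions -/

lemma exists_differentiable_eq_mul {F G : ℂ → ℂ} (hF : Differentiable ℂ F)
    (hG : Differentiable ℂ G) (h : ∀ p, analyticOrderAt G p ≤ analyticOrderAt F p) :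
    ∃ H : ℂ → ℂ, Differentiable ℂ H ∧ F = G * H := by
  have hmer : MeromorphicOn (F / G) Set.univ := fun p _ ↦
    (hF.analyticAt p).meromorphicAt.div (hG.analyticAt p).meromorphicAt
  set H := toMeromorphicNFOn (F / G) Set.univ
  have hH : Differentiable ℂ H := fun p ↦ by
    refine ((meromorphicNFOn_toMeromorphicNFOn (F / G) Set.univ
      trivial).meromorphicOrderAt_nonneg_iff_analyticAt.1 ?_).differentiableAt
    rw [meromorphicOrderAt_toMeromorphicNFOn hmer trivial, meromorphicOrderAt_div
      (hF.analyticAt p).meromorphicAt (hG.analyticAt p).meromorphicAt,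
      (hF.analyticAt p).meromorphicOrderAt_eq, (hG.analyticAt p).meromorphicOrderAt_eq]
    have hp := h p
    cases hFp : analyticOrderAt F p with
    | top => simp [sub_eq_add_neg]
    | coe m =>
      lift analyticOrderAt G p to ℕ using ne_top_of_le_ne_top (by simp [hFp]) hp with l
      have hlm : (l : ℤ) ≤ m := by rw [hFp] at hp; exact_mod_cast hp
      simpa only [ENat.map_natCast] using (by exact_mod_cast sub_nonneg.2 hlm :
        (0 : WithTop ℤ) ≤ ((m : ℤ) : WithTop ℤ) - ((l : ℤ) : WithTop ℤ))
  have hcancel : ∀ z, G z * (F z / G z) = F z := fun z ↦ mul_div_cancel_of_imp' fun hGz ↦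
    (analyticOrderAt_ne_zero.1 (ne_bot_of_le_ne_bot
      (analyticOrderAt_ne_zero.2 ⟨hG.analyticAt z, hGz⟩) (h z))).2
  refine ⟨H, hH, funext fun p ↦ ?_⟩
  refine ((ContinuousAt.eventuallyEq_nhds_iff_eventuallyEq_nhdsNE hF.continuous.continuousAt
    (hG.mul hH).continuous.continuousAt).1 ?_).eq_of_nhds
  filter_upwards [hmer.toMeromorphicNFOn_eq_self_on_nhdsNE (Set.mem_univ p)] with z hz
  exact ((congrArg (G z * ·) hz).trans (hcancel z)).symm

lemma entire_eq_of_forall_ne_zero {P A B : ℂ → ℂ} (hP : Differentiable ℂ P) (hP0 : P ≠ 0)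
    (hA : Differentiable ℂ A) (hB : Differentiable ℂ B) (h : ∀ z, P z ≠ 0 → A z = B z) :
    A = B := by
  have hmul : ∀ z ∈ Set.univ, P z * (A z - B z) = 0 := fun z _ ↦ by
    by_cases hz : P z = 0
    · simp [hz]
    · simp [h z hz]
  refine (AnalyticOnNhd.eq_zero_or_eq_zero_of_mul_eq_zero (fun z _ ↦ hP.analyticAt z)
    (fun z _ ↦ (hA.sub hB).analyticAt z) hmul isPreconnected_univ).elim
    (fun h0 ↦ absurd (funext fun z ↦ h0 z trivial) hP0)
    fun h0 ↦ funext fun z ↦ sub_eq_zero.1 (h0 z trivial)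

lemma exists_simplePoleAt_div {k G : ℂ → ℂ} {p : ℂ} (hk : AnalyticAt ℂ k p)
    (hG : AnalyticAt ℂ G p) (hGp : analyticOrderAt G p = 1) :
    ∃ r, SimplePoleAt (fun z ↦ k z / G z) p r := by
  obtain ⟨g, hg, hgp, hGg⟩ := (hG.analyticOrderAt_eq_natCast (n := 1)).1 (by simpa using hGp)
  have hkg : AnalyticAt ℂ (k / g) p := hk.div hg hgp
  obtain ⟨h, hh, hkgh⟩ : ∃ h, AnalyticAt ℂ h p ∧
      ∀ᶠ z in 𝓝 p, (k / g) z - (k / g) p = (z - p) ^ 1 • h z := by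
    refine (natCast_le_analyticOrderAt (hkg.sub analyticAt_const)).1 ?_
    rw [Nat.cast_one, Order.one_le_iff_ne_zero, analyticOrderAt_ne_zero]
    exact ⟨hkg.sub analyticAt_const, sub_self _⟩
  refine ⟨(k / g) p, h, hh, ?_⟩
  filter_upwards [self_mem_nhdsWithin, hGg.filter_mono nhdsWithin_le_nhds,
    hkgh.filter_mono nhdsWithin_le_nhds] with z hz hGz hhz
  have hzp : z - p ≠ 0 := sub_ne_zero.2 hz
  rw [hGz, pow_one, smul_eq_mul, mul_comm, ← div_div, ← Pi.div_apply, div_eq_iff hzp, add_mul,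
    div_mul_cancel₀ _ hzp, mul_comm (h z), ← sub_eq_iff_eq_add', hhz, pow_one, smul_eq_mul]

lemma exists_mem_submodule_apply_eq {K α : Type*} [Field K] {W : Submodule K (α → K)} {s : Finset α}
    (h : ∀ a ∈ s, ∃ p ∈ W, p a ≠ 0 ∧ ∀ b ∈ s, b ≠ a → p b = 0) (v : α → K) :
    ∃ p ∈ W, ∀ a ∈ s, p a = v a := by
  choose! p hpW hpa hpb using h
  refine ⟨∑ a ∈ s, (v a / p a a) • p a, W.sum_mem fun a ha ↦ W.smul_mem _ (hpW a ha),
    fun a ha ↦ ?_⟩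
  rw [Finset.sum_apply, Finset.sum_eq_single_of_mem a ha fun b hb hba ↦ by
    rw [Pi.smul_apply, hpb b hb a ha hba.symm, smul_zero]]
  exact div_mul_cancel₀ _ (hpa a ha)

/-! ### The period lattice -/

/-- The lattice `Λ = ℤ + τℤ`. -/
def periodLattice (τ : ℂ) : AddSubgroup ℂ := AddSubgroup.closure {1, τ}

lemma mem_periodLattice {τ z : ℂ} : z ∈ periodLattice τ ↔ ∃ m n : ℤ, (m : ℂ) + n * τ = z := by
  simp [periodLattice, AddSubgroup.mem_closure_pair]

lemma halfLattice_iff_two_mul_mem {τ p : ℂ} : HalfLattice τ p ↔ 2 * p ∈ periodLattice τ := by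
  rw [mem_periodLattice, HalfLattice]
  refine exists₂_congr fun m n ↦ ?_
  rw [eq_div_iff two_ne_zero, mul_comm p, mul_comm τ, eq_comm]

lemma countable_setOf_mul_add_mem_periodLattice (τ : ℂ) {a : ℂ} (ha : a ≠ 0) (b : ℂ) :
    {z | a * z + b ∈ periodLattice τ}.Countable := by
  have hΛ : (periodLattice τ : Set ℂ).Countable := by
    refine (Set.countable_range fun p : ℤ × ℤ ↦ (p.1 : ℂ) + p.2 * τ).mono fun z hz ↦ ?_
    obtain ⟨m, n, rfl⟩ := mem_periodLattice.1 hz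
    exact ⟨(m, n), rfl⟩
  exact hΛ.preimage fun x y hxy ↦ mul_left_cancel₀ ha (add_right_cancel hxy)

lemma ofReal_mem_periodLattice {τ : ℂ} (hτ : 0 < τ.im) {x : ℝ} :
    (x : ℂ) ∈ periodLattice τ ↔ ∃ k : ℤ, (k : ℝ) = x := by
  refine mem_periodLattice.trans ⟨fun ⟨k, l, hkl⟩ ↦ ⟨k, ?_⟩, fun ⟨k, hk⟩ ↦ ⟨k, 0, by simp [← hk]⟩⟩
  have hl : l = 0 := by simpa [hτ.ne'] using congrArg im hkl
  simpa [hl] using congrArg re hkl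

lemma exists_finset_sum_eq_pairwise_sub_notMem {τ : ℂ} (hτ : 0 < τ.im) {m : ℕ} (hm : m ≠ 0)
    (σ : ℂ) : ∃ s : Finset ℂ, s.card = m ∧ ∑ a ∈ s, a = σ ∧
      (s : Set ℂ).Pairwise fun a b ↦ a - b ∉ periodLattice τ := by
  have hm' : (m : ℂ) ≠ 0 := Nat.cast_ne_zero.2 hm
  set x : ℂ := (σ - ∑ j ∈ Finset.range m, (j / m : ℂ)) / m with hx
  set a : ℕ → ℂ := fun j ↦ x + j / m with ha
  have inequiv : ∀ i ∈ Finset.range m, ∀ j ∈ Finset.range m,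
      a i - a j ∈ periodLattice τ → i = j := fun i hi j hj hij ↦ by
    have hdiff : a i - a j = ((i - j : ℝ) / m : ℝ) := by rw [ha]; push_cast; ring
    obtain ⟨k, hk⟩ := (ofReal_mem_periodLattice hτ).1 (hdiff ▸ hij)
    have hkm : k * m = (i - j : ℤ) := by
      exact_mod_cast (eq_div_iff (Nat.cast_ne_zero.2 hm)).1 hk
    rw [Finset.mem_range] at hi hj
    have := Int.eq_zero_of_abs_lt_dvd (Dvd.intro_left k hkm) (by rw [abs_lt]; omega)
    omega
  have hinj : Set.InjOn a (Finset.range m) := fun i hi j hj hij ↦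
    inequiv i hi j hj (by simp [hij])
  refine ⟨(Finset.range m).image a, ?_, ?_, ?_⟩
  · rw [Finset.card_image_of_injOn hinj, Finset.card_range]
  · rw [Finset.sum_image hinj, ha, Finset.sum_add_distrib, Finset.sum_const, Finset.card_range,
      nsmul_eq_mul, hx, mul_div_cancel₀ _ hm', sub_add_cancel]
  · rw [Finset.coe_image, Set.InjOn.pairwise_image hinj]
    exact fun i hi j hj hij h ↦ hij (inequiv i hi j hj h)

/-! ### Theta functions -/

/-- The space of theta functions of degree `n` and multiplier `c`, normalised to be `1`-periodic:
entire functions with `F (z + τ) = c (-e^{-2πiz})ⁿ F z`. The sign makes the theta function with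
zero divisor `D` modulo `Λ` have multiplier `e^{2πi ΣD}`. -/
def thetaSpace (τ : ℂ) (n : ℕ) (c : ℂ) : Submodule ℂ (ℂ → ℂ) where
  carrier := {F | Differentiable ℂ F ∧ Function.Periodic F 1 ∧
    ∀ z, F (z + τ) = c * (-exp (-(2 * π * I * z))) ^ n * F z}
  add_mem' := fun ⟨hF, hF1, hFτ⟩ ⟨hG, hG1, hGτ⟩ ↦ ⟨hF.add hG, hF1.add hG1, fun z ↦ by
    simp only [Pi.add_apply, hFτ, hGτ, mul_add]⟩
  zero_mem' := ⟨differentiable_const 0, fun _ ↦ rfl, fun _ ↦ (mul_zero _).symm⟩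
  smul_mem' := fun a F ⟨hF, hF1, hFτ⟩ ↦ ⟨hF.const_smul a, hF1.smul a, fun z ↦ by
    simp only [Pi.smul_apply, smul_eq_mul, hFτ, mul_left_comm a]⟩

section thetaSpace

variable {τ c d : ℂ} {m n : ℕ} {F G H : ℂ → ℂ}

lemma mul_mem_thetaSpace (hF : F ∈ thetaSpace τ m c) (hG : G ∈ thetaSpace τ n d) :
    F * G ∈ thetaSpace τ (m + n) (c * d) :=
  ⟨hF.1.mul hG.1, hF.2.1.mul hG.2.1, fun z ↦ by
    rw [Pi.mul_apply, Pi.mul_apply, hF.2.2, hG.2.2]; ring⟩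

lemma comp_add_const_mem_thetaSpace (hF : F ∈ thetaSpace τ n c) (a : ℂ) :
    (fun z ↦ F (z + a)) ∈ thetaSpace τ n (c * exp (-(2 * π * I * a)) ^ n) := by
  refine ⟨hF.1.comp (differentiable_id.add_const a), hF.2.1.add_const a, fun z ↦ ?_⟩
  simp only [add_right_comm z τ a]
  rw [hF.2.2, mul_add, neg_add, Complex.exp_add, ← neg_mul, mul_pow]
  ring

lemma mem_thetaSpace_of_mul_mem (hG : G ∈ thetaSpace τ m c) (hG0 : G ≠ 0) (hc : c ≠ 0)
    (hH : Differentiable ℂ H) (hGH : G * H ∈ thetaSpace τ (m + n) (c * d)) :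
    H ∈ thetaSpace τ n d := by
  have hshift : ∀ v : ℂ, Differentiable ℂ fun z ↦ H (z + v) := fun v ↦
    hH.comp (differentiable_id.add_const v)
  refine ⟨hH, congrFun (entire_eq_of_forall_ne_zero hG.1 hG0 (hshift 1) hH fun z hz ↦ ?_),
    congrFun (entire_eq_of_forall_ne_zero hG.1 hG0 (hshift τ) (by fun_prop) fun z hz ↦ ?_)⟩
  · have h := hGH.2.1 z
    rw [Pi.mul_apply, Pi.mul_apply, hG.2.1] at h
    exact mul_left_cancel₀ hz h
  · have h := hGH.2.2 z
    rw [Pi.mul_apply, Pi.mul_apply, hG.2.2] at h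
    have he : c * (-exp (-(2 * π * I * z))) ^ m ≠ 0 := by simp [hc, exp_ne_zero]
    refine mul_left_cancel₀ (mul_ne_zero he hz) (h.trans ?_)
    ring

lemma mem_thetaSpace_of_mul_eq {P g h : ℂ → ℂ} (hP : P ∈ thetaSpace τ n d) (hP0 : P ≠ 0)
    (hd : d ≠ 0) (hg1 : Function.Periodic g 1) (hgτ : ∀ z, g (z + τ) = c * g z)
    (hh : Differentiable ℂ h) (hgP : ∀ z, P z ≠ 0 → g z * P z = h z) :
    h ∈ thetaSpace τ n (c * d) := by
  have hshift : ∀ v : ℂ, Differentiable ℂ fun z ↦ h (z + v) := fun v ↦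
    hh.comp (differentiable_id.add_const v)
  refine ⟨hh, congrFun (entire_eq_of_forall_ne_zero hP.1 hP0 (hshift 1) hh fun z hz ↦ ?_),
    congrFun (entire_eq_of_forall_ne_zero hP.1 hP0 (hshift τ) (by fun_prop) fun z hz ↦ ?_)⟩
  · rw [← hgP (z + 1) (by rwa [hP.2.1]), hP.2.1, hg1, hgP z hz]
  · rw [← hgP (z + τ) (by simp [hP.2.2, hd, hz, exp_ne_zero]), hP.2.2, hgτ, ← hgP z hz]
    ring

lemma analyticOrderAt_add_of_mem_periodLattice (hF : F ∈ thetaSpace τ n c) (hc : c ≠ 0)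
    {v : ℂ} (hv : v ∈ periodLattice τ) (z : ℂ) :
    analyticOrderAt F (z + v) = analyticOrderAt F z := by
  have htranslate : ∀ v z, analyticOrderAt F (z + v) = analyticOrderAt (fun w ↦ F (w + v)) z :=
    fun v z ↦ (analyticOrderAt_comp_of_deriv_ne_zero (g := fun w ↦ w + v) (by fun_prop)
      (by simp)).symm
  induction hv using AddSubgroup.closure_induction generalizing z with
  | mem v hv =>
    rw [htranslate]
    rcases hv with rfl | rfl
    · exact congrArg (analyticOrderAt · z) (funext hF.2.1)
    · have hunit : AnalyticAt ℂ (fun z ↦ c * (-exp (-(2 * π * I * z))) ^ n) z := by fun_prop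
      rw [funext hF.2.2]
      refine (analyticOrderAt_mul hunit (hF.1.analyticAt z)).trans ?_
      rw [hunit.analyticOrderAt_eq_zero.2 (by simp [hc, exp_ne_zero]), zero_add]
  | zero => rw [add_zero]
  | add v w _ _ hv hw => rw [← add_assoc, hw, hv]
  | neg v _ hv => rw [← hv (z + -v), neg_add_cancel_right]

lemma apply_eq_apply_of_mem_thetaSpace_zero_one (hτ : 0 < τ.im) (hF : F ∈ thetaSpace τ 0 1)
    (z w : ℂ) : F z = F w := by
  have hFτ : Function.Periodic F τ := fun z ↦ by simpa using hF.2.2 z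
  refine hF.1.apply_eq_apply_of_bounded ?_ z w
  have hK : IsCompact ((fun p : ℝ × ℝ ↦ F (p.1 + p.2 * τ)) '' (Set.Icc 0 1 ×ˢ Set.Icc 0 1)) :=
    (isCompact_Icc.prod isCompact_Icc).image (hF.1.continuous.comp (by fun_prop))
  refine hK.isBounded.subset (Set.range_subset_iff.2 fun z ↦ ?_)
  set y : ℝ := z.im / τ.im with hy
  set x : ℝ := z.re - y * τ.re with hx
  have hz : z = x + y * τ := by apply Complex.ext <;> simp [hx, hy, hτ.ne']
  refine ⟨(Int.fract x, Int.fract y), ⟨⟨Int.fract_nonneg _, (Int.fract_lt_one _).le⟩,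
    ⟨Int.fract_nonneg _, (Int.fract_lt_one _).le⟩⟩, ?_⟩
  have hfract : ((Int.fract x : ℝ) : ℂ) + (Int.fract y : ℝ) * τ = z - ⌊y⌋ * τ - ⌊x⌋ * 1 := by
    rw [hz, Int.fract, Int.fract]
    push_cast
    ring
  simp only [hfract, hF.2.1.sub_int_mul_eq, hFτ.sub_int_mul_eq]

end thetaSpace

/-! ### Products with prescribed zeros -/

/-- The infinite `x`-Pochhammer symbol `(w; x)_∞`, the building block of theta functions in
product form. -/
def infPochhammer (x w : ℂ) : ℂ := ∏' n : ℕ, (1 - x ^ n * w)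

section infPochhammer

variable {x : ℂ}

lemma infPochhammer_eq_one_sub_mul (hx : ‖x‖ < 1) (w : ℂ) :
    infPochhammer x w = (1 - w) * infPochhammer x (x * w) := by
  rw [infPochhammer, tprod_eq_zero_mul']
  · simp [infPochhammer, pow_succ, mul_assoc]
  · simp only [sub_eq_add_neg]
    refine multipliable_one_add_of_summable ?_
    simpa [pow_succ, mul_assoc] using
      (summable_geometric_of_lt_one (norm_nonneg x) hx).mul_right ‖x * w‖

lemma infPochhammer_ne_zero (hx : ‖x‖ < 1) {w : ℂ} (h : ∀ n : ℕ, x ^ n * w ≠ 1) :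
    infPochhammer x w ≠ 0 := by
  refine tprod_one_add_ne_zero_of_summable (f := fun n ↦ -(x ^ n * w)) (fun n ↦ ?_) ?_
  · simpa [← sub_eq_add_neg, sub_eq_zero] using (h n).symm
  · simpa using (summable_geometric_of_lt_one (norm_nonneg x) hx).mul_right ‖w‖

lemma differentiable_infPochhammer (hx : ‖x‖ < 1) : Differentiable ℂ (infPochhammer x) := by
  have hprod : HasProdLocallyUniformlyOn (fun n w ↦ 1 + -(x ^ n * w)) (infPochhammer x)
      Set.univ := by
    refine hasProdLocallyUniformlyOn_of_forall_compact isOpen_univ fun K _ hK ↦ ?_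
    obtain ⟨R, hR⟩ := hK.isBounded.exists_norm_le
    have hbound : ∀ n, ∀ w ∈ K, ‖-(x ^ n * w)‖ ≤ ‖x‖ ^ n * R := fun n w hw ↦ by
      simpa using mul_le_mul_of_nonneg_left (hR w hw) (by positivity)
    have heq : infPochhammer x = fun w ↦ ∏' n : ℕ, (1 + -(x ^ n * w)) := by
      simp only [← sub_eq_add_neg]; rfl
    rw [heq]
    exact ((summable_geometric_of_lt_one (norm_nonneg x) hx).mul_right
      R).hasProdUniformlyOn_nat_one_add hK (.of_forall hbound) fun _ ↦ by fun_prop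
  refine differentiableOn_univ.1 (hprod.differentiableOn (.of_forall fun _ ↦ ?_) isOpen_univ)
  simpa [Finset.prod_fn] using DifferentiableOn.finsetProd (fun _ _ ↦ by fun_prop)

end infPochhammer

/-- The product side of the Jacobi triple product, normalised to be `1`-periodic: the theta
function of degree one vanishing on `Λ`. -/
def thetaProduct (τ z : ℂ) : ℂ :=
  infPochhammer (exp (2 * π * I * τ)) (exp (2 * π * I * z)) *
    infPochhammer (exp (2 * π * I * τ)) (exp (2 * π * I * (τ - z)))

section thetaProduct

variable {τ : ℂ}

lemma norm_exp_two_pi_I_mul_lt_one (hτ : 0 < τ.im) : ‖exp (2 * π * I * τ)‖ < 1 :=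
  UpperHalfPlane.norm_exp_two_pi_I_lt_one ⟨τ, hτ⟩

lemma thetaProduct_mem_thetaSpace (hτ : 0 < τ.im) : thetaProduct τ ∈ thetaSpace τ 1 1 := by
  have hx := norm_exp_two_pi_I_mul_lt_one hτ
  have hd := differentiable_infPochhammer hx
  refine ⟨(hd.comp (by fun_prop : Differentiable ℂ fun z ↦ exp (2 * π * I * z))).mul
    (hd.comp (by fun_prop : Differentiable ℂ fun z ↦ exp (2 * π * I * (τ - z)))),
    fun z ↦ ?_, fun z ↦ ?_⟩
  · have h₁ : exp (2 * π * I * (z + 1)) = exp (2 * π * I * z) :=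
      exp_eq_exp_iff_exists_int.2 ⟨1, by push_cast; ring⟩
    have h₂ : exp (2 * π * I * (τ - (z + 1))) = exp (2 * π * I * (τ - z)) :=
      exp_eq_exp_iff_exists_int.2 ⟨-1, by push_cast; ring⟩
    rw [thetaProduct, thetaProduct, h₁, h₂]
  · set x := exp (2 * π * I * τ)
    set w := exp (2 * π * I * z) with hw
    have h₁ : exp (2 * π * I * (z + τ)) = x * w := by rw [← Complex.exp_add]; ring_nf
    have h₂ : exp (2 * π * I * (τ - (z + τ))) = w⁻¹ := by rw [← Complex.exp_neg]; ring_nf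
    have h₃ : exp (2 * π * I * (τ - z)) = x * w⁻¹ := by
      rw [← Complex.exp_neg, ← Complex.exp_add]; ring_nf
    have hw0 : w ≠ 0 := exp_ne_zero _
    rw [thetaProduct, thetaProduct, h₁, h₂, h₃, infPochhammer_eq_one_sub_mul hx w,
      infPochhammer_eq_one_sub_mul hx w⁻¹, Complex.exp_neg, ← hw]
    field_simp
    ring

lemma thetaProduct_ne_zero (hτ : 0 < τ.im) {z : ℂ} (hz : z ∉ periodLattice τ) :
    thetaProduct τ z ≠ 0 := by
  have hx := norm_exp_two_pi_I_mul_lt_one hτ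
  have hexp : ∀ n : ℤ, exp (2 * π * I * (n * τ + z)) ≠ 1 := fun n h ↦ by
    obtain ⟨m, hm⟩ := exp_eq_one_iff.1 h
    refine hz (mem_periodLattice.2 ⟨m, -n, ?_⟩)
    have := mul_left_cancel₀ two_pi_I_ne_zero (hm.trans (mul_comm _ _))
    rw [← this]; push_cast; ring
  refine mul_ne_zero (infPochhammer_ne_zero hx fun n h ↦ hexp n ?_)
    (infPochhammer_ne_zero hx fun n h ↦ hexp (-(n + 1)) ?_)
  · rw [← h, ← Complex.exp_nat_mul, ← Complex.exp_add]
    push_cast; ring_nf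
  · rw [← Complex.exp_nat_mul, ← Complex.exp_add] at h
    rw [← inv_one, ← h, ← Complex.exp_neg]
    push_cast; ring_nf

lemma analyticOrderAt_thetaProduct_zero (hτ : 0 < τ.im) :
    analyticOrderAt (thetaProduct τ) 0 = 1 := by
  have hx := norm_exp_two_pi_I_mul_lt_one hτ
  set x := exp (2 * π * I * τ) with hxdef
  set ψ : ℂ → ℂ := fun z ↦ infPochhammer x (x * exp (2 * π * I * z)) *
    infPochhammer x (exp (2 * π * I * (τ - z))) with hψ
  have hd := differentiable_infPochhammer hx
  have hψd : Differentiable ℂ ψ :=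
    (hd.comp (by fun_prop : Differentiable ℂ fun z ↦ x * exp (2 * π * I * z))).mul
      (hd.comp (by fun_prop : Differentiable ℂ fun z ↦ exp (2 * π * I * (τ - z))))
  have hfactor : thetaProduct τ = (fun z ↦ 1 - exp (2 * π * I * z)) * ψ := funext fun z ↦ by
    rw [thetaProduct, infPochhammer_eq_one_sub_mul hx, mul_assoc]; rfl
  have hx0 : infPochhammer x x ≠ 0 := infPochhammer_ne_zero hx fun n h ↦ by
    have := pow_lt_one₀ (norm_nonneg x) hx n.succ_ne_zero
    rw [← norm_pow, pow_succ, h, norm_one] at this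
    exact this.false
  have hderiv : HasDerivAt (fun z : ℂ ↦ 1 - exp (2 * π * I * z))
      (-(exp (2 * π * I * 0) * (2 * π * I * 1))) 0 :=
    (((hasDerivAt_id (0 : ℂ)).const_mul (2 * π * I)).cexp).const_sub 1
  have hlin : AnalyticAt ℂ (fun z : ℂ ↦ 1 - exp (2 * π * I * z)) 0 := by fun_prop
  rw [hfactor, analyticOrderAt_mul hlin (hψd.analyticAt 0),
    hlin.analyticOrderAt_eq_one_of_zero_deriv_ne_zero (by simp) (by simp [hderiv.deriv]),
    (hψd.analyticAt 0).analyticOrderAt_eq_zero.2 (by simp [hψ, ← hxdef, hx0]), add_zero]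

lemma analyticOrderAt_thetaProduct (hτ : 0 < τ.im) {z : ℂ} (hz : z ∈ periodLattice τ) :
    analyticOrderAt (thetaProduct τ) z = 1 := by
  rw [← zero_add z, analyticOrderAt_add_of_mem_periodLattice (thetaProduct_mem_thetaSpace hτ)
    one_ne_zero hz, analyticOrderAt_thetaProduct_zero hτ]

lemma thetaProduct_eq_zero_iff (hτ : 0 < τ.im) {z : ℂ} :
    thetaProduct τ z = 0 ↔ z ∈ periodLattice τ := by
  refine ⟨fun h ↦ by_contra fun hz ↦ thetaProduct_ne_zero hτ hz h, fun hz ↦ ?_⟩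
  exact (analyticOrderAt_ne_zero.1 (by simp [analyticOrderAt_thetaProduct hτ hz])).2

end thetaProduct

/-- The theta function with zero divisor `D` modulo `Λ`. -/
def thetaOfDivisor (τ : ℂ) (D : Multiset ℂ) (z : ℂ) : ℂ :=
  (D.map fun a ↦ thetaProduct τ (z - a)).prod

section thetaOfDivisor

variable {τ : ℂ}

lemma thetaOfDivisor_zero : thetaOfDivisor τ 0 = 1 :=
  funext fun _ ↦ by simp [thetaOfDivisor]

lemma thetaOfDivisor_cons (a : ℂ) (D : Multiset ℂ) : thetaOfDivisor τ (a ::ₘ D) =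
    (fun z ↦ thetaProduct τ (z - a)) * thetaOfDivisor τ D := by
  ext z
  simp [thetaOfDivisor]

lemma thetaProduct_sub_mem_thetaSpace (hτ : 0 < τ.im) (a : ℂ) :
    (fun z ↦ thetaProduct τ (z - a)) ∈ thetaSpace τ 1 (exp (2 * π * I * a)) := by
  simpa [sub_eq_add_neg] using comp_add_const_mem_thetaSpace (thetaProduct_mem_thetaSpace hτ) (-a)

lemma thetaOfDivisor_mem_thetaSpace (hτ : 0 < τ.im) (D : Multiset ℂ) :
    thetaOfDivisor τ D ∈ thetaSpace τ D.card (exp (2 * π * I * D.sum)) := by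
  induction D using Multiset.induction_on with
  | empty =>
    rw [thetaOfDivisor_zero]
    exact ⟨differentiable_const 1, fun _ ↦ rfl, fun _ ↦ by simp⟩
  | cons a D ih =>
    rw [thetaOfDivisor_cons, Multiset.card_cons, Multiset.sum_cons, mul_add, Complex.exp_add,
      add_comm D.card]
    exact mul_mem_thetaSpace (thetaProduct_sub_mem_thetaSpace hτ a) ih

lemma thetaOfDivisor_eq_zero_iff (hτ : 0 < τ.im) {D : Multiset ℂ} {z : ℂ} :
    thetaOfDivisor τ D z = 0 ↔ ∃ a ∈ D, z - a ∈ periodLattice τ := by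
  simp [thetaOfDivisor, Multiset.prod_eq_zero_iff, thetaProduct_eq_zero_iff hτ]

/-- Beyond `D` one zero is forced by the multiplier, and the remaining ones are put at a generic
point `t`, which moves the forced zero away from `q`. -/
lemma exists_mem_thetaSpace_apply_ne_zero (hτ : 0 < τ.im) {n : ℕ} {c : ℂ} (hc : c ≠ 0)
    {D : Multiset ℂ} (hD : D.card + 2 ≤ n) {q : ℂ} (hq : ∀ a ∈ D, q - a ∉ periodLattice τ) :
    ∃ F ∈ thetaSpace τ n c, F q ≠ 0 ∧ ∀ a ∈ D, F a = 0 := by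
  obtain ⟨j, rfl⟩ := Nat.exists_eq_add_of_le hD
  obtain ⟨σ, rfl⟩ : ∃ σ, c = exp (2 * π * I * σ) :=
    ⟨log c / (2 * π * I), by rw [mul_div_cancel₀ _ two_pi_I_ne_zero, exp_log hc]⟩
  obtain ⟨t, htq, htσ⟩ : ∃ t, q - t ∉ periodLattice τ ∧
      q - (σ - D.sum - (j + 1) * t) ∉ periodLattice τ := by
    obtain ⟨t, ht⟩ := (((countable_setOf_mul_add_mem_periodLattice τ (neg_ne_zero.2 one_ne_zero)
      q).union (countable_setOf_mul_add_mem_periodLattice τ (Nat.cast_add_one_ne_zero j)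
        (q - σ + D.sum))).dense_compl ℝ).nonempty
    refine ⟨t, fun h ↦ ht (.inl ?_), fun h ↦ ht (.inr ?_)⟩
    · change -1 * t + q ∈ periodLattice τ
      convert h using 1; ring
    · change (j + 1) * t + (q - σ + D.sum) ∈ periodLattice τ
      convert h using 1; ring
  set E := (σ - D.sum - (j + 1) * t) ::ₘ (Multiset.replicate (j + 1) t + D) with hE
  have hEcard : E.card = D.card + 2 + j := by simp [hE]; ring
  have hEsum : E.sum = σ := by simp [hE]; ring
  refine ⟨thetaOfDivisor τ E, hEcard ▸ hEsum ▸ thetaOfDivisor_mem_thetaSpace hτ E, fun h ↦ ?_,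
    fun a ha ↦ (thetaOfDivisor_eq_zero_iff hτ).2 ⟨a, by simp [hE, ha], by simp⟩⟩
  obtain ⟨a, ha, hqa⟩ := (thetaOfDivisor_eq_zero_iff hτ).1 h
  rcases Multiset.mem_cons.1 ha with rfl | ha
  · exact htσ hqa
  rcases Multiset.mem_add.1 ha with ha | ha
  · exact htq (Multiset.eq_of_mem_replicate ha ▸ hqa)
  · exact hq a ha hqa

lemma exists_eq_thetaProduct_sub_mul (hτ : 0 < τ.im) {n : ℕ} {d : ℂ} (hd : d ≠ 0) {F : ℂ → ℂ}
    {a : ℂ} (hF : F ∈ thetaSpace τ (1 + n) (exp (2 * π * I * a) * d)) (hFa : F a = 0) :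
    ∃ H ∈ thetaSpace τ n d, F = (fun z ↦ thetaProduct τ (z - a)) * H := by
  set G : ℂ → ℂ := fun z ↦ thetaProduct τ (z - a)
  have hG := thetaProduct_sub_mem_thetaSpace hτ a
  have hGorder : ∀ p, analyticOrderAt G p = analyticOrderAt (thetaProduct τ) (p - a) := fun p ↦
    analyticOrderAt_comp_of_deriv_ne_zero (f := thetaProduct τ) (g := fun z ↦ z - a)
      (by fun_prop) (by simp)
  have hG0 : G ≠ 0 := fun h ↦ by
    have := hGorder a
    rw [h, sub_self, analyticOrderAt_thetaProduct_zero hτ] at this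
    simp [analyticOrderAt_eq_top.2] at this
  obtain ⟨H, hH, hFGH⟩ := exists_differentiable_eq_mul hF.1 hG.1 fun p ↦ by
    by_cases hp : p - a ∈ periodLattice τ
    · rw [hGorder, analyticOrderAt_thetaProduct hτ hp, ← add_sub_cancel a p,
        analyticOrderAt_add_of_mem_periodLattice hF (mul_ne_zero (exp_ne_zero _) hd) hp,
        Order.one_le_iff_ne_zero, analyticOrderAt_ne_zero]
      exact ⟨hF.1.analyticAt a, hFa⟩
    · rw [(hG.1.analyticAt p).analyticOrderAt_eq_zero.2 (thetaProduct_ne_zero hτ hp)]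
      exact zero_le
  exact ⟨H, mem_thetaSpace_of_mul_mem hG hG0 (exp_ne_zero _) hH (hFGH ▸ hF), hFGH⟩

lemma exists_eq_thetaOfDivisor_mul (hτ : 0 < τ.im) {n : ℕ} {d : ℂ} (hd : d ≠ 0) {s : Finset ℂ}
    (hs : (s : Set ℂ).Pairwise fun a b ↦ a - b ∉ periodLattice τ) {F : ℂ → ℂ}
    (hF : F ∈ thetaSpace τ (s.card + n) (exp (2 * π * I * ∑ a ∈ s, a) * d))
    (hFs : ∀ a ∈ s, F a = 0) : ∃ H ∈ thetaSpace τ n d, F = thetaOfDivisor τ s.val * H := by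
  induction s using Finset.induction_on generalizing F with
  | empty => exact ⟨F, by simpa using hF, by rw [Finset.empty_val, thetaOfDivisor_zero, one_mul]⟩
  | insert a s ha ih =>
    rw [Finset.card_insert_of_notMem ha, Finset.sum_insert ha, mul_add, Complex.exp_add, mul_assoc,
      add_comm s.card, add_assoc] at hF
    obtain ⟨F', hF', rfl⟩ := exists_eq_thetaProduct_sub_mul hτ (mul_ne_zero (exp_ne_zero _) hd) hF
      (hFs a (Finset.mem_insert_self a s))
    obtain ⟨H, hH, rfl⟩ := ih (hs.mono (by simp)) hF' fun b hb ↦ by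
      have hba : b - a ∉ periodLattice τ :=
        hs (by simp [hb]) (by simp) (ne_of_mem_of_not_mem hb ha)
      exact (mul_eq_zero.1 (hFs b (Finset.mem_insert_of_mem hb))).resolve_left
        (thetaProduct_ne_zero hτ hba)
    refine ⟨H, hH, ?_⟩
    rw [Finset.insert_val_of_notMem ha, thetaOfDivisor_cons, mul_assoc]

end thetaOfDivisor

/-! ### Products of theta functions -/

section mul

variable {τ c d : ℂ} {m n : ℕ}

lemma exists_mem_thetaSpace_mul_apply_ne_zero (hτ : 0 < τ.im) (hc : c ≠ 0) (hd : d ≠ 0)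
    {s : Finset ℂ} (hs : (s : Set ℂ).Pairwise fun a b ↦ a - b ∉ periodLattice τ)
    (hs2 : 2 ≤ s.card) (hn : 3 ≤ n) {a : ℂ} (ha : a ∈ s) :
    ∃ p ∈ thetaSpace τ s.card c * thetaSpace τ n d, p a ≠ 0 ∧ ∀ b ∈ s, b ≠ a → p b = 0 := by
  have hcard : (s.erase a).card = s.card - 1 := Finset.card_erase_of_mem ha
  obtain ⟨b, hb⟩ : (s.erase a).Nonempty := Finset.card_pos.1 (by omega)
  have hcard' : ((s.erase a).erase b).card = s.card - 1 - 1 := by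
    rw [Finset.card_erase_of_mem hb, hcard]
  have hsub : ∀ x ∈ s.erase a, a - x ∉ periodLattice τ := fun x hx ↦
    hs ha (Finset.mem_of_mem_erase hx) (Finset.ne_of_mem_erase hx).symm
  obtain ⟨F, hF, hFa, hF0⟩ := exists_mem_thetaSpace_apply_ne_zero hτ hc (n := s.card)
    (D := ((s.erase a).erase b).val) (by rw [Finset.card_val]; omega)
    fun x hx ↦ hsub x (Finset.mem_of_mem_erase hx)
  obtain ⟨G, hG, hGa, hG0⟩ := exists_mem_thetaSpace_apply_ne_zero hτ hd (D := {b})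
    (by simpa using hn) (by simpa using hsub b hb)
  refine ⟨F * G, Submodule.mul_mem_mul hF hG, mul_ne_zero hFa hGa, fun x hx hxa ↦ ?_⟩
  by_cases hxb : x = b
  · exact mul_eq_zero_of_right (F x) (hxb ▸ hG0 b (Multiset.mem_singleton_self b))
  · have hx' : x ∈ (s.erase a).erase b := by simp [hx, hxa, hxb]
    exact mul_eq_zero_of_left (hF0 x hx') (G x)

theorem thetaSpace_mul_thetaSpace (hτ : 0 < τ.im) (hm : 2 ≤ m) (hn : 3 ≤ n) (hc : c ≠ 0)
    (hd : d ≠ 0) : thetaSpace τ m c * thetaSpace τ n d = thetaSpace τ (m + n) (c * d) := by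
  refine le_antisymm (Submodule.mul_le.2 fun _ hF _ hG ↦ mul_mem_thetaSpace hF hG) fun h hh ↦ ?_
  obtain ⟨s, rfl, hsum, hs⟩ := exists_finset_sum_eq_pairwise_sub_notMem hτ
    (Nat.ne_zero_of_lt hm) (log c / (2 * π * I))
  have hsc : exp (2 * π * I * ∑ a ∈ s, a) = c := by
    rw [hsum, mul_div_cancel₀ _ two_pi_I_ne_zero, exp_log hc]
  obtain ⟨p, hp, hps⟩ := exists_mem_submodule_apply_eq
    (fun a ha ↦ exists_mem_thetaSpace_mul_apply_ne_zero hτ hc hd hs hm hn ha) h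
  have hpT : p ∈ thetaSpace τ (s.card + n) (c * d) :=
    Submodule.mul_le.2 (fun _ hF _ hG ↦ mul_mem_thetaSpace hF hG) hp
  obtain ⟨H, hH, hhp⟩ := exists_eq_thetaOfDivisor_mul hτ hd hs
    (hsc.symm ▸ sub_mem hh hpT) fun a ha ↦ by simp [hps a ha]
  have hD : thetaOfDivisor τ s.val ∈ thetaSpace τ s.card c := by
    simpa [Finset.sum_val, hsc] using thetaOfDivisor_mem_thetaSpace hτ s.val
  rw [← sub_add_cancel h p, hhp]
  exact add_mem (Submodule.mul_mem_mul hD hH) hp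

end mul

/-! ### The zeros of `θ` -/

section theta

variable {τ : ℂ}

lemma integral_jacobiTheta₂ (hτ : 0 < τ.im) : ∫ x : ℝ in 0..1, jacobiTheta₂ x τ = 1 := by
  have hterm : ∀ n : ℤ, n ≠ 0 → ∫ x : ℝ in 0..1, jacobiTheta₂_term n x τ = 0 := fun n hn ↦ by
    simp only [jacobiTheta₂_term, Complex.exp_add, intervalIntegral.integral_mul_const]
    rw [integral_exp_mul_complex (by simp [hn, Real.pi_ne_zero])]
    simp [mul_comm _ (n : ℂ), exp_int_mul_two_pi_mul_I]
  have hsum : HasSum (fun n : ℤ ↦ ∫ x : ℝ in 0..1, jacobiTheta₂_term n x τ)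
      (∫ x : ℝ in 0..1, jacobiTheta₂ x τ) :=
    intervalIntegral.hasSum_integral_of_dominated_convergence
      (fun n _ ↦ ‖jacobiTheta₂_term n 0 τ‖)
      (fun n ↦ by unfold jacobiTheta₂_term; fun_prop)
      (fun n ↦ .of_forall fun x _ ↦ by simp [norm_jacobiTheta₂_term])
      (.of_forall fun _ _ ↦ (hasSum_jacobiTheta₂_term 0 hτ).summable.norm)
      intervalIntegrable_const
      (.of_forall fun x _ ↦ hasSum_jacobiTheta₂_term x hτ)
  rw [hsum.unique (hasSum_single 0 hterm)]
  simp [jacobiTheta₂_term]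

lemma jacobiTheta₂_mem_thetaSpace (hτ : 0 < τ.im) :
    (fun z ↦ jacobiTheta₂ z τ) ∈ thetaSpace τ 1 (exp (2 * π * I * ((1 - τ) / 2))) := by
  refine ⟨fun z ↦ differentiableAt_jacobiTheta₂_fst z hτ, fun z ↦ jacobiTheta₂_add_left z τ,
    fun z ↦ (jacobiTheta₂_add_left' z τ).trans ?_⟩
  rw [pow_one, ← neg_one_mul (exp _), ← Complex.exp_pi_mul_I, ← Complex.exp_add,
    ← Complex.exp_add]
  congr 1
  exact exp_eq_exp_iff_exists_int.2 ⟨-1, by push_cast; ring⟩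

lemma jacobiTheta₂_half_sub_eq_zero : jacobiTheta₂ ((1 - τ) / 2) τ = 0 := by
  have h : jacobiTheta₂ ((1 - τ) / 2) τ = -jacobiTheta₂ ((1 - τ) / 2) τ := by
    conv_lhs =>
      rw [← jacobiTheta₂_neg_left, show -((1 - τ) / 2) = (1 - τ) / 2 - 1 + τ by ring,
        jacobiTheta₂_add_left', ← jacobiTheta₂_add_left ((1 - τ) / 2 - 1), sub_add_cancel]
    rw [show -π * I * (τ + 2 * ((1 - τ) / 2 - 1)) = π * I by ring, Complex.exp_pi_mul_I,
      neg_one_mul]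
  exact self_eq_neg.1 h

lemma theta_eq_jacobiTheta₂ (τ z : ℂ) :
    θ τ z = I * exp (π * I * τ / 4 - π * I * z) * jacobiTheta₂ (z + (1 - τ) / 2) τ := by
  rw [θ, mul_assoc I, jacobiTheta₂, ← tsum_mul_left (a := exp _)]
  refine congrArg (I * ·) (tsum_congr fun n ↦ ?_)
  have hn : (-1 : ℂ) ^ n = exp (π * I * n) := by
    rw [mul_comm, Complex.exp_int_mul, Complex.exp_pi_mul_I]
  rw [jacobiTheta₂_term, hn, ← Complex.exp_add, ← Complex.exp_add, ← Complex.exp_add]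
  ring_nf

lemma exists_theta_eq (hτ : 0 < τ.im) :
    ∃ C ≠ 0, ∀ z, θ τ z = C * exp (-(π * I * z)) * thetaProduct τ z := by
  obtain ⟨H, hH, hJ⟩ := exists_eq_thetaProduct_sub_mul hτ (n := 0) one_ne_zero
    (F := fun z ↦ jacobiTheta₂ z τ) (a := (1 - τ) / 2)
    (by simpa using jacobiTheta₂_mem_thetaSpace hτ) jacobiTheta₂_half_sub_eq_zero
  have hJ' : ∀ z, jacobiTheta₂ z τ = thetaProduct τ (z - (1 - τ) / 2) * H 0 := fun z ↦
    (congrFun hJ z).trans (congrArg (thetaProduct τ (z - (1 - τ) / 2) * ·)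
      (apply_eq_apply_of_mem_thetaSpace_zero_one hτ hH z 0))
  have hH0 : H 0 ≠ 0 := fun h0 ↦ by
    simpa [hJ', h0] using integral_jacobiTheta₂ hτ
  refine ⟨I * exp (π * I * τ / 4) * H 0, by simp [hH0, exp_ne_zero], fun z ↦ ?_⟩
  rw [theta_eq_jacobiTheta₂, hJ', add_sub_cancel_right, sub_eq_add_neg, Complex.exp_add]
  ring

lemma theta_eq_zero_iff (hτ : 0 < τ.im) {z : ℂ} : θ τ z = 0 ↔ z ∈ periodLattice τ := by
  obtain ⟨C, hC, hθ⟩ := exists_theta_eq hτ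
  simp [hθ, hC, exp_ne_zero, thetaProduct_eq_zero_iff hτ]

lemma analyticOrderAt_theta (hτ : 0 < τ.im) {z : ℂ} (hz : z ∈ periodLattice τ) :
    analyticOrderAt (θ τ) z = 1 := by
  obtain ⟨C, hC, hθ⟩ := exists_theta_eq hτ
  have hunit : AnalyticAt ℂ (fun z ↦ C * exp (-(π * I * z))) z := by fun_prop
  rw [funext hθ]
  refine (analyticOrderAt_mul hunit
    ((thetaProduct_mem_thetaSpace hτ).1.analyticAt z)).trans ?_
  rw [hunit.analyticOrderAt_eq_zero.2 (by simp [hC, exp_ne_zero]), zero_add,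
    analyticOrderAt_thetaProduct hτ hz]

lemma analyticOrderAt_theta_two_mul (hτ : 0 < τ.im) {p : ℂ} (hp : HalfLattice τ p) :
    analyticOrderAt (fun z ↦ θ τ (2 * z)) p = 1 :=
  (analyticOrderAt_comp_of_deriv_ne_zero (f := θ τ) (g := fun z ↦ 2 * z) (by fun_prop)
    (by simp)).trans
    (analyticOrderAt_theta hτ (halfLattice_iff_two_mul_mem.1 hp))

lemma theta_two_mul_ne_zero (hτ : 0 < τ.im) : (fun z ↦ θ τ (2 * z)) ≠ 0 := fun h ↦ by
  simpa [h, analyticOrderAt_eq_top.2] using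
    analyticOrderAt_theta_two_mul hτ (p := 0) ⟨0, 0, by simp⟩

lemma comp_two_mul_mem_thetaSpace {n : ℕ} {c : ℂ} {F : ℂ → ℂ} (hF : F ∈ thetaSpace τ n c) :
    (fun z ↦ F (2 * z)) ∈ thetaSpace τ (4 * n) (c ^ 2 * exp (-(2 * π * I * τ)) ^ n) := by
  refine ⟨hF.1.comp (by fun_prop), fun z ↦ ?_, fun z ↦ ?_⟩
  · simp only [mul_add, two_mul (1 : ℂ), ← add_assoc, hF.2.1 _]
  · have hexp : (-exp (-(2 * π * I * (2 * z + τ)))) * -exp (-(2 * π * I * (2 * z))) =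
        exp (-(2 * π * I * τ)) * (-exp (-(2 * π * I * z))) ^ 4 := by
      rw [neg_mul_neg, Even.neg_pow (by decide), ← Complex.exp_nat_mul, ← Complex.exp_add,
        ← Complex.exp_add]
      push_cast
      ring_nf
    simp only [show 2 * (z + τ) = 2 * z + τ + τ by ring, hF.2.2]
    rw [pow_mul (-exp _), mul_assoc (c ^ 2), ← mul_pow, ← hexp, mul_pow]
    ring

lemma theta_two_mul_mem_thetaSpace (hτ : 0 < τ.im) :
    (fun z ↦ θ τ (2 * z)) ∈ thetaSpace τ 4 (exp (-(4 * π * I * τ))) := by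
  obtain ⟨C, -, hθ⟩ := exists_theta_eq hτ
  have hexp : (fun z ↦ exp (-(2 * π * I * z))) ∈ thetaSpace τ 0 (exp (-(2 * π * I * τ))) := by
    refine ⟨by fun_prop, fun z ↦ exp_eq_exp_iff_exists_int.2 ⟨-1, by push_cast; ring⟩,
      fun z ↦ ?_⟩
    rw [pow_zero, mul_one, ← Complex.exp_add]
    ring_nf
  have hprod := mul_mem_thetaSpace (comp_two_mul_mem_thetaSpace (thetaProduct_mem_thetaSpace hτ))
    hexp
  have hmult : exp (-(4 * π * I * τ)) =
      1 ^ 2 * exp (-(2 * π * I * τ)) ^ 1 * exp (-(2 * π * I * τ)) := by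
    rw [one_pow, one_mul, pow_one, ← Complex.exp_add]
    ring_nf
  rw [hmult]
  convert Submodule.smul_mem _ C hprod using 1
  funext z
  rw [hθ, Pi.smul_apply, Pi.mul_apply, smul_eq_mul, show π * I * (2 * z) = 2 * π * I * z by ring]
  ring

end theta

/-! ### Products of functions in `V₁(μ)` and of difference operators -/

section V

variable {τ μ η : ℂ}

lemma memV1_div_theta_two_mul (hτ : 0 < τ.im) {F : ℂ → ℂ}
    (hF : F ∈ thetaSpace τ 4 (μ * exp (-(4 * π * I * τ)))) :
    memV1 τ μ (fun z ↦ F z / θ τ (2 * z)) := by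
  have hΘ := theta_two_mul_mem_thetaSpace hτ
  refine ⟨fun p _ ↦ (hF.1.analyticAt p).meromorphicAt.div (hΘ.1.analyticAt p).meromorphicAt,
    fun z ↦ congrArg₂ (· / ·) (hF.2.1 z) (hΘ.2.1 z), fun z ↦ ?_, fun p hp ↦ ?_, fun p hp ↦ ?_⟩
  · have hmult : exp (-(4 * π * I * τ)) * (-exp (-(2 * π * I * z))) ^ 4 ≠ 0 := by
      simp [exp_ne_zero]
    refine (congrArg₂ (· / ·) (hF.2.2 z) (hΘ.2.2 z)).trans ?_
    rw [mul_assoc μ, mul_assoc μ, mul_div_assoc, mul_div_mul_left _ _ hmult]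
  · have hp' : θ τ (2 * p) ≠ 0 := fun h ↦
      hp (halfLattice_iff_two_mul_mem.2 ((theta_eq_zero_iff hτ).1 h))
    exact ⟨_, (hF.1.analyticAt p).div (hΘ.1.analyticAt p) hp', .of_forall fun _ ↦ rfl⟩
  · exact exists_simplePoleAt_div (hF.1.analyticAt p) (hΘ.1.analyticAt p)
      (analyticOrderAt_theta_two_mul hτ hp)

lemma Pk_two (τ η z : ℂ) : Pk τ η 2 z = θ τ (2 * z) * θ τ (2 * (z + η)) := by
  simp [Pk, Finset.prod_range_succ, mul_add]

lemma Pk_two_mem_thetaSpace (hτ : 0 < τ.im) (η : ℂ) : Pk τ η 2 ∈ thetaSpace τ (4 + 4)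
    (exp (-(4 * π * I * τ)) * (exp (-(4 * π * I * τ)) * exp (-(2 * π * I * η)) ^ 4)) := by
  have hΘ := theta_two_mul_mem_thetaSpace hτ
  rw [funext (Pk_two τ η)]
  exact mul_mem_thetaSpace hΘ (comp_add_const_mem_thetaSpace hΘ η)

lemma Pk_two_ne_zero (hτ : 0 < τ.im) (η : ℂ) : Pk τ η 2 ≠ 0 := fun hP ↦ by
  have hΘ := (theta_two_mul_mem_thetaSpace hτ).1
  have hzero : (fun z ↦ θ τ (2 * (z + η))) = 0 :=
    entire_eq_of_forall_ne_zero hΘ (theta_two_mul_ne_zero hτ)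
      (hΘ.comp (differentiable_id.add_const η)) (differentiable_const 0) fun z hz ↦
        (mul_eq_zero.1 ((Pk_two τ η z).symm.trans (congrFun hP z))).resolve_left hz
  exact theta_two_mul_ne_zero hτ (funext fun z ↦ by simpa using congrFun hzero (z - η))

lemma memVk.exists_mem_thetaSpace (hτ : 0 < τ.im) {g : ℂ → ℂ} (hg : memVk τ μ η 2 g) :
    ∃ h ∈ thetaSpace τ (4 + 4) (μ * exp (-(4 * π * I * τ)) *
      (μ * exp (-(4 * π * I * τ)) * exp (-(2 * π * I * η)) ^ 4)),
      ∀ z, Pk τ η 2 z ≠ 0 → g z * Pk τ η 2 z = h z := by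
  obtain ⟨-, hg1, hgτ, h, hh, hgh⟩ := hg
  refine ⟨h, ?_, hgh⟩
  convert mem_thetaSpace_of_mul_eq (Pk_two_mem_thetaSpace hτ η) (Pk_two_ne_zero hτ η)
    (by simp [exp_ne_zero]) hg1 hgτ hh hgh using 2
  ring

theorem memVk.exists_eq_sum (hτ : 0 < τ.im) (hμ : μ ≠ 0) {g : ℂ → ℂ} (hg : memVk τ μ η 2 g) :
    ∃ (n : ℕ) (c : Fin n → ℂ) (f₁ f₂ : Fin n → (ℂ → ℂ)),
      (∀ i, memV1 τ μ (f₁ i) ∧ memV1 τ μ (f₂ i)) ∧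
      ∀ z, Pk τ η 2 z ≠ 0 → g z = ∑ i, c i * f₁ i z * f₂ i (z + η) := by
  obtain ⟨h, hh, hgh⟩ := hg.exists_mem_thetaSpace hτ
  have hμκ : μ * exp (-(4 * π * I * τ)) ≠ 0 := mul_ne_zero hμ (exp_ne_zero _)
  rw [← thetaSpace_mul_thetaSpace hτ (by norm_num) (by norm_num) hμκ
    (mul_ne_zero hμκ (pow_ne_zero 4 (exp_ne_zero _))), Submodule.mul_eq_span_mul_set,
    Submodule.mem_span_set'] at hh
  obtain ⟨n, c, p, rfl⟩ := hh
  choose F hF G hG hFG using fun i ↦ Set.mem_mul.1 (p i).2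
  have hGη : ∀ i, (fun z ↦ G i (z - η)) ∈ thetaSpace τ 4 (μ * exp (-(4 * π * I * τ))) :=
    fun i ↦ by
      simp only [sub_eq_add_neg]
      convert comp_add_const_mem_thetaSpace (hG i) (-η) using 2
      rw [mul_assoc _ (_ ^ 4), ← mul_pow, ← Complex.exp_add]
      simp
  refine ⟨n, c, fun i z ↦ F i z / θ τ (2 * z), fun i z ↦ G i (z - η) / θ τ (2 * z),
    fun i ↦ ⟨memV1_div_theta_two_mul hτ (hF i), memV1_div_theta_two_mul hτ (hGη i)⟩,
    fun z hz ↦ ?_⟩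
  rw [eq_div_of_mul_eq hz (hgh z hz), Finset.sum_apply, Finset.sum_div, Pk_two]
  refine Finset.sum_congr rfl fun i _ ↦ ?_
  simp only [Pi.smul_apply, ← hFG, Pi.mul_apply, smul_eq_mul, add_sub_cancel_right]
  rw [mul_assoc, div_mul_div_comm, mul_div_assoc]

lemma ADO_mul_ADO_apply (f₁ f₂ F : ℂ → ℂ) (z : ℂ) : (ADO η f₁ * ADO η f₂) F z =
    f₁ z * f₂ (z + η) * F (z + 2 * η) +
      (f₁ z * f₂ (-(z + η)) + f₁ (-z) * f₂ (z - η)) * F z +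
      f₁ (-z) * f₂ (-(z - η)) * F (z - 2 * η) := by
  simp only [Module.End.mul_apply, ADO, LinearMap.coe_mk, AddHom.coe_mk]
  rw [add_sub_cancel_right, sub_add_cancel, add_assoc z, sub_sub, ← two_mul]
  ring

lemma ADO_mul_ADO_mem_Vcal {f₁ f₂ : ℂ → ℂ} (h₁ : memV1 τ μ f₁) (h₂ : memV1 τ μ f₂) :
    ADO η f₁ * ADO η f₂ ∈ Vcal τ μ η 2 :=
  Submodule.subset_span ⟨![f₁, f₂], Fin.forall_fin_two.2 ⟨h₁, h₂⟩, by simp [List.ofFn_succ]⟩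

lemma exists_mem_Vcal_apply_eq {ι : Type*} (s : Finset ι) (c : ι → ℂ) {f₁ f₂ : ι → ℂ → ℂ}
    (hf : ∀ i, memV1 τ μ (f₁ i) ∧ memV1 τ μ (f₂ i)) :
    ∃ T ∈ Vcal τ μ η 2, ∃ c₀ cm : ℂ → ℂ, ∀ (F : ℂ → ℂ) (z : ℂ),
      T F z = (∑ i ∈ s, c i * f₁ i z * f₂ i (z + η)) * F (z + 2 * η) + c₀ z * F z +
        cm z * F (z - 2 * η) := by
  refine ⟨∑ i ∈ s, c i • (ADO η (f₁ i) * ADO η (f₂ i)), Submodule.sum_mem _ fun i _ ↦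
    Submodule.smul_mem _ _ (ADO_mul_ADO_mem_Vcal (hf i).1 (hf i).2),
    fun z ↦ ∑ i ∈ s, c i * (f₁ i z * f₂ i (-(z + η)) + f₁ i (-z) * f₂ i (z - η)),
    fun z ↦ ∑ i ∈ s, c i * (f₁ i (-z) * f₂ i (-(z - η))), fun F z ↦ ?_⟩
  simp only [LinearMap.coe_sum, Finset.sum_apply, LinearMap.smul_apply, Pi.smul_apply, smul_eq_mul,
    ADO_mul_ADO_apply, Finset.sum_mul, ← Finset.sum_add_distrib]
  exact Finset.sum_congr rfl fun i _ ↦ by ring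

end V

end

/-- every `g ∈ V₂(μ)` is a finite linear combination of functions
`z ↦ f₁(z)f₂(z+η)` with `f₁,f₂ ∈ V₁(μ)`; consequently every `c₂ ∈ V₂(μ)` arises as the
coefficient of the shift `F ↦ F(·+2η)` of some operator in `𝒱₂(μ)`. -/
theorem statement4 (τ : ℂ) (hτ : 0 < τ.im) (μ : ℂ) (hμ : μ ≠ 0) (η : ℂ) (hη : η ≠ 0) :
    (∀ g : ℂ → ℂ, memVk τ μ η 2 g →
      ∃ (n : ℕ) (c : Fin n → ℂ) (f₁ f₂ : Fin n → (ℂ → ℂ)),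
        (∀ i, memV1 τ μ (f₁ i) ∧ memV1 τ μ (f₂ i)) ∧
        ∀ z, Pk τ η 2 z ≠ 0 → g z = ∑ i, c i * f₁ i z * f₂ i (z + η)) ∧
    (∀ c₂ : ℂ → ℂ, memVk τ μ η 2 c₂ →
      ∃ T ∈ Vcal τ μ η 2, ∃ c₀ cm : ℂ → ℂ, ∀ F : ℂ → ℂ, ∀ z : ℂ,
        θ τ (2 * z) ≠ 0 → θ τ (2 * z + 2 * η) ≠ 0 → θ τ (2 * z - 2 * η) ≠ 0 →
        (T F) z = c₂ z * F (z + 2 * η) + c₀ z * F z + cm z * F (z - 2 * η)) := by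
  refine ⟨fun g hg ↦ hg.exists_eq_sum hτ hμ, fun c₂ hc₂ ↦ ?_⟩
  obtain ⟨n, c, f₁, f₂, hf, hsum⟩ := hc₂.exists_eq_sum hτ hμ
  obtain ⟨T, hT, c₀, cm, hTF⟩ := exists_mem_Vcal_apply_eq Finset.univ c hf
  refine ⟨T, hT, c₀, cm, fun F z h₁ h₂ _ ↦ ?_⟩
  have hP : Pk τ η 2 z ≠ 0 := by
    rw [Pk_two, mul_add]
    exact mul_ne_zero h₁ h₂
  rw [hTF, hsum z hP]
end
end

section
/- Let a₊, a₋ ∈ ℂ with Re a₊ > 0 and Re a₋ > 0, let δ ∈ {+,−}, and let l ∈ ℂ⁴ satisfy exp(−2πi(l₁+l₂+l₃+l₄+2ia)) = exp(−2πa_{−δ}). Let Θ_{1,δ} denote the linear span, in the space of functions ℂ → ℂ, of the functions z ↦ R_δ(z+y)R_δ(z−y) and z ↦ R_δ(z+y+1/2)R_δ(z−y+1/2) as y ranges over ℂ. Then for each δ′ ∈ {+,−}, the operator A_{R,δ′}(l) maps Θ_{1,δ} into Θ_{1,δ}. -/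
open Complex Filter

noncomputable section

/-- `R_δ(z) = ∏_{k≥1} (1 − q_δ^{2k−1} e^{2iπz})(1 − q_δ^{2k−1} e^{−2iπz})`. -/
def Rfun (qd : ℂ) (z : ℂ) : ℂ :=
  ∏' k : ℕ, ((1 - qd ^ (2 * k + 1) * Complex.exp (2 * Real.pi * I * z)) *
    (1 - qd ^ (2 * k + 1) * Complex.exp (-(2 * Real.pi * I * z))))

/-- The elliptic gamma function
`G(z) = ∏_{m,n≥1} (1 − q₊^{2m−1}q₋^{2n−1}e^{−2iπz})/(1 − q₊^{2m−1}q₋^{2n−1}e^{2iπz})`. -/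
def Gfun (qp qm : ℂ) (z : ℂ) : ℂ :=
  ∏' p : ℕ × ℕ,
    (1 - qp ^ (2 * p.1 + 1) * qm ^ (2 * p.2 + 1) * Complex.exp (-(2 * Real.pi * I * z))) /
    (1 - qp ^ (2 * p.1 + 1) * qm ^ (2 * p.2 + 1) * Complex.exp (2 * Real.pi * I * z))

/-- `a_δ` for `δ ∈ {+,−}` (`true = +`, `false = −`). -/
def aof (ap am : ℂ) (δ : Bool) : ℂ := if δ then ap else am

/-- `f_δ(l;z) = ∏_{n=1}^4 R_δ(z+l_n+ia_{−δ}/4) / R_δ(2z−ia_δ/2)`. -/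
def fδ (ap am : ℂ) (δ : Bool) (l : Fin 4 → ℂ) (z : ℂ) : ℂ :=
  (∏ n : Fin 4, Rfun (Complex.exp (-(Real.pi : ℂ) * aof ap am δ))
      (z + l n + I * aof ap am (!δ) / 4)) /
    Rfun (Complex.exp (-(Real.pi : ℂ) * aof ap am δ)) (2 * z - I * aof ap am δ / 2)

/-- The space `Θ_{1,δ}`: the span of the functions `z ↦ R_δ(z+y)R_δ(z−y)` and
`z ↦ R_δ(z+y+1/2)R_δ(z−y+1/2)`, `y ∈ ℂ`. -/
def Theta1 (ap am : ℂ) (δ : Bool) : Submodule ℂ (ℂ → ℂ) :=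
  Submodule.span ℂ
    ({g | ∃ y : ℂ, g = fun z => Rfun (Complex.exp (-(Real.pi : ℂ) * aof ap am δ)) (z + y) *
        Rfun (Complex.exp (-(Real.pi : ℂ) * aof ap am δ)) (z - y)} ∪
     {g | ∃ y : ℂ, g = fun z => Rfun (Complex.exp (-(Real.pi : ℂ) * aof ap am δ)) (z + y + 1/2) *
        Rfun (Complex.exp (-(Real.pi : ℂ) * aof ap am δ)) (z - y + 1/2)})

/-!
Multiplying numerator and denominator of `f_{δ′}(l;z)` by `e^{−2πiz}` turns the denominator into
an odd theta function `D` of order 4 for the lattice `ℤ + ia_{δ′}ℤ`, with simple zeros that are all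
half-periods, and `A_{R,δ′}(l)F` into `(U(z) − U(−z)) / D(z)` for an entire function `U`. When `U`
is a theta function whose multiplier makes `U(z) − U(−z)` one as well, oddness forces the latter to
vanish at all half-periods, so the quotient is an even theta function whose order is smaller by 4.

`Θ_{1,δ}` consists of all even theta functions of order 2 with multiplier `exp(2πa_δ)`: modulo the
generator `y = 0`, such a function vanishes at the zeros of the generator `y = 1/4`, and their
quotient is doubly periodic, hence constant by Liouville's theorem. For `δ′ = δ` the condition on
`l` gives `U` the right multiplier in order 6, so the quotient has order 2. For `δ′ = −δ` the even
function `e^{2πiz}F(z + ia_δ/2)`, which again lies in `Θ_{1,δ}`, factors out of `U(z) − U(−z)`; what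
remains has order 4, so its quotient by `D` is constant.
-/

section AnalyticOrder

variable {𝕜 : Type*} [NontriviallyNormedField 𝕜] {f g E N : 𝕜 → 𝕜} {z : 𝕜}

lemma meromorphicOrderAt_div_nonneg (hE : AnalyticAt 𝕜 E z) (hN : AnalyticAt 𝕜 N z)
    (htop : analyticOrderAt E z ≠ ⊤) (h : analyticOrderAt E z ≤ analyticOrderAt N z) :
    0 ≤ meromorphicOrderAt (N / E) z := by
  rw [meromorphicOrderAt_div hN.meromorphicAt hE.meromorphicAt, hN.meromorphicOrderAt_eq,
    hE.meromorphicOrderAt_eq]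
  lift analyticOrderAt E z to ℕ using htop with m
  cases hn : analyticOrderAt N z with
  | top => exact le_top
  | coe n =>
    rw [hn, Nat.cast_le] at h
    exact WithTop.coe_le_coe.2 (sub_nonneg.2 (Nat.cast_le (α := ℤ).2 h))

lemma analyticOrderAt_le_of_le_one (hf : AnalyticAt 𝕜 f z) (hg : AnalyticAt 𝕜 g z)
    (hf1 : analyticOrderAt f z ≤ 1) (h : f z = 0 → g z = 0) :
    analyticOrderAt f z ≤ analyticOrderAt g z := by
  by_cases hz : f z = 0
  · exact hf1.trans (Order.one_le_iff_ne_zero.2 (hg.analyticOrderAt_ne_zero.2 (h hz)))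
  · rw [hf.analyticOrderAt_eq_zero.2 hz]
    exact zero_le

lemma ne_zero_of_analyticOrderAt_le_one (hf1 : analyticOrderAt f z ≤ 1) : f ≠ 0 := by
  rintro rfl
  simp [analyticOrderAt_eq_top.2] at hf1

lemma analyticOrderAt_mul_le_one (hf : AnalyticAt 𝕜 f z) (hg : AnalyticAt 𝕜 g z)
    (hf1 : analyticOrderAt f z ≤ 1) (hg1 : analyticOrderAt g z ≤ 1)
    (h : f z = 0 → g z ≠ 0) : analyticOrderAt (f * g) z ≤ 1 := by
  rw [analyticOrderAt_mul hf hg]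
  by_cases hz : f z = 0
  · rwa [hg.analyticOrderAt_eq_zero.2 (h hz), add_zero]
  · rwa [hf.analyticOrderAt_eq_zero.2 hz, zero_add]

lemma analyticOrderAt_comp_mul_add [CompleteSpace 𝕜] [CharZero 𝕜] {c : 𝕜} (hc : c ≠ 0)
    (f : 𝕜 → 𝕜) (d z : 𝕜) :
    analyticOrderAt (fun w => f (c * w + d)) z = analyticOrderAt f (c * z + d) :=
  analyticOrderAt_comp_of_deriv_ne_zero (f := f) (g := fun w => c * w + d) (by fun_prop)
    (by simpa using hc)

end AnalyticOrder

section EntireFunctions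

variable {E N f g₁ g₂ : ℂ → ℂ} {z : ℂ}

lemma eq_zero_of_analyticOrderAt_eq_top (hf : Differentiable ℂ f)
    (h : analyticOrderAt f z = ⊤) : f = 0 :=
  AnalyticOnNhd.eq_of_eventuallyEq (fun w _ => hf.analyticAt w) (fun _ _ => analyticAt_const)
    (analyticOrderAt_eq_top.1 h)

lemma exists_differentiable_eq_mul_s13 (hE : Differentiable ℂ E) (hN : Differentiable ℂ N)
    (h : ∀ z, analyticOrderAt E z ≤ analyticOrderAt N z) :
    ∃ g : ℂ → ℂ, Differentiable ℂ g ∧ N = E * g := by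
  by_cases htop : ∃ z, analyticOrderAt E z = ⊤
  · obtain ⟨z, hz⟩ := htop
    refine ⟨0, differentiable_const 0, ?_⟩
    rw [mul_zero]
    exact eq_zero_of_analyticOrderAt_eq_top hN (top_le_iff.1 (hz ▸ h z))
  push Not at htop
  have hmer : MeromorphicOn (N / E) Set.univ := fun z _ =>
    (hN.analyticAt z).meromorphicAt.div (hE.analyticAt z).meromorphicAt
  have hg : Differentiable ℂ (toMeromorphicNFOn (N / E) Set.univ) := fun z => by
    have hnf := meromorphicNFOn_toMeromorphicNFOn (N / E) Set.univ (Set.mem_univ z)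
    refine (hnf.meromorphicOrderAt_nonneg_iff_analyticAt.1 ?_).differentiableAt
    rw [meromorphicOrderAt_toMeromorphicNFOn hmer (Set.mem_univ z)]
    exact meromorphicOrderAt_div_nonneg (hE.analyticAt z) (hN.analyticAt z) (htop z) (h z)
  refine ⟨_, hg, funext fun z => EventuallyEq.eq_of_nhds (f := N) ?_⟩
  rw [← hN.continuous.continuousAt.eventuallyEq_nhds_iff_eventuallyEq_nhdsNE
    (hE.mul hg).continuous.continuousAt]
  have hE_ne : ∀ᶠ w in nhdsWithin z {z}ᶜ, E w ≠ 0 :=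
    (hE.analyticAt z).eventually_eq_zero_or_eventually_ne_zero.resolve_left
      fun h0 => htop z (analyticOrderAt_eq_top.2 h0)
  filter_upwards [hE_ne, hmer.toMeromorphicNFOn_eq_self_on_nhdsNE (Set.mem_univ z)] with w hw hgw
  rw [Pi.mul_apply, hgw, Pi.div_apply, mul_div_cancel₀ _ hw]

lemma mul_left_cancel_of_differentiable (hE : Differentiable ℂ E) (hE0 : E ≠ 0)
    (h₁ : Differentiable ℂ g₁) (h₂ : Differentiable ℂ g₂) (h : E * g₁ = E * g₂) : g₁ = g₂ := by
  have hmul : ∀ z ∈ Set.univ, E z * (g₁ - g₂) z = 0 := fun z _ => by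
    rw [← Pi.mul_apply, mul_sub, h, sub_self, Pi.zero_apply]
  exact (AnalyticOnNhd.eq_zero_or_eq_zero_of_mul_eq_zero (fun z _ => hE.analyticAt z)
    (fun z _ => (h₁.sub h₂).analyticAt z) hmul isPreconnected_univ).elim
    (fun h0 => absurd (funext fun z => h0 z trivial) hE0)
    (fun h0 => funext fun z => sub_eq_zero.1 (h0 z trivial))

end EntireFunctions

section PeriodLattice

variable {a : ℂ} {f : ℂ → ℂ}

/-- The period pair `(1, ia)` in the half-plane `0 < Re a`; the functions below are
quasi-periodic with respect to its lattice. -/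
def periodPair (a : ℂ) (ha : 0 < a.re) : PeriodPair where
  ω₁ := 1
  ω₂ := I * a
  indep := by
    rw [LinearIndependent.pair_iff]
    intro s t h
    have ht : t = 0 := by simpa [ha.ne'] using congrArg im h
    subst ht
    simpa using congrArg re h

lemma mem_lattice_periodPair (ha : 0 < a.re) {z : ℂ} :
    z ∈ (periodPair a ha).lattice ↔ ∃ m n : ℤ, m + n * (I * a) = z := by
  simp [PeriodPair.mem_lattice, periodPair]

lemma I_mul_mem_lattice (ha : 0 < a.re) : I * a ∈ (periodPair a ha).lattice :=
  (periodPair a ha).ω₂_mem_lattice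

lemma half_notMem_lattice (ha : 0 < a.re) : (1 / 2 : ℂ) ∉ (periodPair a ha).lattice :=
  (periodPair a ha).ω₁_div_two_notMem_lattice

lemma quarter_notMem_lattice (ha : 0 < a.re) : (1 / 4 : ℂ) ∉ (periodPair a ha).lattice :=
  fun h => half_notMem_lattice ha (by convert add_mem h h using 1; norm_num)

lemma apply_eq_apply_of_doubly_periodic (ha : 0 < a.re) (hf : Differentiable ℂ f)
    (h1 : Function.Periodic f 1) (h2 : Function.Periodic f (I * a)) (z w : ℂ) : f z = f w := by
  refine hf.apply_eq_apply_of_bounded (IsCompact.isBounded ?_) z w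
  refine IsZLattice.isCompact_range_of_periodic (periodPair a ha).lattice f hf.continuous
    fun z w hw => ?_
  obtain ⟨m, n, rfl⟩ := (mem_lattice_periodPair ha).1 hw
  simpa using (h1.int_mul m).add_period (h2.int_mul n) z

end PeriodLattice

section OddPochhammer

variable {q : ℂ}

/-- The infinite product `∏_{k≥0} (1 − q^{2k+1} u)`, that is, the `q`-Pochhammer symbol
`(qu; q²)_∞`: the building block of `R_δ`, with `q = q_δ`. -/
def oddPochhammer (q u : ℂ) : ℂ := ∏' k : ℕ, (1 - q ^ (2 * k + 1) * u)

lemma summable_norm_odd_pow_mul (hq : ‖q‖ < 1) (r : ℝ) :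
    Summable fun k : ℕ => ‖q‖ ^ (2 * k + 1) * r :=
  ((summable_geometric_of_lt_one (norm_nonneg _) hq).comp_injective
    (i := fun k : ℕ => 2 * k + 1) (fun a b h => by simpa using h)).mul_right r

lemma multipliable_oddPochhammer (hq : ‖q‖ < 1) (u : ℂ) :
    Multipliable fun k : ℕ => 1 - q ^ (2 * k + 1) * u := by
  simp_rw [sub_eq_add_neg]
  exact multipliable_one_add_of_summable (by simpa using summable_norm_odd_pow_mul hq ‖u‖)

lemma differentiable_oddPochhammer (hq : ‖q‖ < 1) : Differentiable ℂ (oddPochhammer q) := by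
  intro u
  have hprod : HasProdLocallyUniformlyOn (fun (k : ℕ) (v : ℂ) => 1 + -(q ^ (2 * k + 1) * v))
      (fun v => ∏' k : ℕ, (1 + -(q ^ (2 * k + 1) * v))) (Metric.ball 0 (‖u‖ + 1)) := by
    refine (summable_norm_odd_pow_mul hq (‖u‖ + 1)).hasProdLocallyUniformlyOn_one_add
      Metric.isOpen_ball (Eventually.of_forall fun k v hv => ?_) fun k => by fun_prop
    rw [norm_neg, norm_mul, norm_pow]
    gcongr
    exact (mem_ball_zero_iff.1 hv).le
  have hdiff := hprod.differentiableOn (.of_forall fun s => by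
    simpa only [Finset.prod_fn] using DifferentiableOn.finsetProd (fun _ _ => by fun_prop))
    Metric.isOpen_ball
  simp only [← sub_eq_add_neg] at hdiff
  exact hdiff.differentiableAt (Metric.isOpen_ball.mem_nhds (by simp))

lemma oddPochhammer_eq_mul (hq : ‖q‖ < 1) (u : ℂ) :
    oddPochhammer q u = (1 - q * u) * oddPochhammer q (q ^ 2 * u) := by
  have hshift (k : ℕ) : 1 - q ^ (2 * (k + 1) + 1) * u = 1 - q ^ (2 * k + 1) * (q ^ 2 * u) := by
    ring
  unfold oddPochhammer
  rw [tprod_eq_zero_mul' (by simpa only [hshift] using multipliable_oddPochhammer hq (q ^ 2 * u))]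
  simp only [hshift, mul_zero, zero_add, pow_one]

lemma exists_pow_mul_eq_one_of_oddPochhammer_eq_zero (hq : ‖q‖ < 1) {u : ℂ}
    (hu : oddPochhammer q u = 0) : ∃ k : ℕ, q ^ (2 * k + 1) * u = 1 := by
  by_contra! h
  simp_rw [oddPochhammer, sub_eq_add_neg] at hu
  refine tprod_one_add_ne_zero_of_summable (fun k hk => h k ?_)
    (by simpa using summable_norm_odd_pow_mul hq ‖u‖) hu
  linear_combination -hk

lemma oddPochhammer_ne_zero (hq : ‖q‖ < 1) {u : ℂ} (hu : ‖u‖ ≤ 1) : oddPochhammer q u ≠ 0 := by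
  intro h
  obtain ⟨k, hk⟩ := exists_pow_mul_eq_one_of_oddPochhammer_eq_zero hq h
  have hlt : ‖q ^ (2 * k + 1) * u‖ < 1 := by
    rw [norm_mul, norm_pow]
    exact mul_lt_one_of_nonneg_of_lt_one_left (by positivity)
      (pow_lt_one₀ (norm_nonneg q) hq (by omega)) hu
  rw [hk, norm_one] at hlt
  exact lt_irrefl _ hlt

lemma analyticOrderAt_oddPochhammer_le_one_of_ne_zero (hq : ‖q‖ < 1) {u : ℂ}
    (hu : oddPochhammer q u ≠ 0) : analyticOrderAt (oddPochhammer q) u ≤ 1 :=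
  ((differentiable_oddPochhammer hq |>.analyticAt u).analyticOrderAt_eq_zero.2 hu).trans_le
    zero_le_one

lemma analyticOrderAt_oddPochhammer_le_one_of_sq_mul (hq : ‖q‖ < 1) (hq0 : q ≠ 0) {u : ℂ}
    (hu : analyticOrderAt (oddPochhammer q) (q ^ 2 * u) ≤ 1) :
    analyticOrderAt (oddPochhammer q) u ≤ 1 := by
  have hP := differentiable_oddPochhammer hq
  have hfactor : oddPochhammer q = (fun v => 1 - q * v) * fun v => oddPochhammer q (q ^ 2 * v) :=
    funext (oddPochhammer_eq_mul hq)
  have hlinear : AnalyticAt ℂ (fun v => 1 - q * v) u := by fun_prop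
  have hlinear_deriv : deriv (fun v => 1 - q * v) u ≠ 0 := by simpa using hq0
  have hscaled : analyticOrderAt (fun v => oddPochhammer q (q ^ 2 * v)) u ≤ 1 := by
    simpa only [add_zero] using
      (analyticOrderAt_comp_mul_add (pow_ne_zero 2 hq0) (oddPochhammer q) 0 u).trans_le
        (by rwa [add_zero])
  have hlinear_order : analyticOrderAt (fun v => 1 - q * v) u ≤ 1 := by
    by_cases hqu : 1 - q * u = 0
    · exact (hlinear.analyticOrderAt_eq_one_of_zero_deriv_ne_zero hqu hlinear_deriv).le
    · exact (hlinear.analyticOrderAt_eq_zero.2 hqu).trans_le zero_le_one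
  rw [hfactor]
  refine analyticOrderAt_mul_le_one hlinear
    (Differentiable.analyticAt (hP.comp (by fun_prop)) u) hlinear_order hscaled fun hqu => ?_
  rw [show q ^ 2 * u = q by linear_combination -q * hqu]
  exact oddPochhammer_ne_zero hq hq.le

lemma analyticOrderAt_oddPochhammer_le_one (hq : ‖q‖ < 1) (u : ℂ) :
    analyticOrderAt (oddPochhammer q) u ≤ 1 := by
  rcases eq_or_ne q 0 with rfl | hq0
  · refine analyticOrderAt_oddPochhammer_le_one_of_ne_zero hq fun hu => ?_
    obtain ⟨k, hk⟩ := exists_pow_mul_eq_one_of_oddPochhammer_eq_zero hq hu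
    simp at hk
  -- Far along the sequence `q^{2n} u → 0` the function is near `oddPochhammer q 0 ≠ 0`.
  have htendsto : Tendsto (fun n : ℕ => (q ^ 2) ^ n * u) atTop (nhds 0) := by
    simpa using (tendsto_pow_atTop_nhds_zero_of_norm_lt_one
      (x := q ^ 2) (by rw [norm_pow]; exact pow_lt_one₀ (norm_nonneg _) hq two_ne_zero)).mul_const u
  obtain ⟨n, hn⟩ := (htendsto.eventually
    ((differentiable_oddPochhammer hq).continuous.continuousAt.eventually_ne
      (oddPochhammer_ne_zero hq (by simp)))).exists
  have hiterate : analyticOrderAt (oddPochhammer q) ((q ^ 2) ^ n * u) ≤ 1 :=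
    analyticOrderAt_oddPochhammer_le_one_of_ne_zero hq hn
  clear hn
  induction n with
  | zero => simpa using hiterate
  | succ n ih =>
    refine ih (analyticOrderAt_oddPochhammer_le_one_of_sq_mul hq hq0 ?_)
    rwa [← mul_assoc, ← pow_succ']

end OddPochhammer

section ThetaFunctions

/-- Theta functions of order `k` and multiplier `c` for the period lattice `ℤ + iaℤ`: entire
functions with `g(z + 1) = g(z)` and `g(z + ia) = c e^{−2πikz} g(z)`. -/
structure IsTheta (a : ℂ) (k : ℕ) (c : ℂ) (g : ℂ → ℂ) : Prop where
  differentiable : Differentiable ℂ g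
  periodic : Function.Periodic g 1
  add_period : ∀ z, g (z + I * a) = c * exp (-(2 * Real.pi * I * z)) ^ k * g z

namespace IsTheta

variable {a c d : ℂ} {j k r : ℕ} {f g : ℂ → ℂ}

lemma add (hf : IsTheta a k c f) (hg : IsTheta a k c g) : IsTheta a k c (f + g) where
  differentiable := hf.differentiable.add hg.differentiable
  periodic := hf.periodic.add hg.periodic
  add_period z := by simp only [Pi.add_apply, hf.add_period, hg.add_period]; ring

lemma const_smul (hg : IsTheta a k c g) (x : ℂ) : IsTheta a k c (x • g) where
  differentiable := hg.differentiable.const_smul x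
  periodic := hg.periodic.smul x
  add_period z := by simp only [Pi.smul_apply, smul_eq_mul, hg.add_period]; ring

lemma sub (hf : IsTheta a k c f) (hg : IsTheta a k c g) : IsTheta a k c (f - g) := by
  simpa [sub_eq_add_neg] using hf.add (hg.const_smul (-1))

lemma mul (hf : IsTheta a j c f) (hg : IsTheta a k d g) :
    IsTheta a (j + k) (c * d) (f * g) where
  differentiable := hf.differentiable.mul hg.differentiable
  periodic := hf.periodic.mul hg.periodic
  add_period z := by simp only [Pi.mul_apply, hf.add_period, hg.add_period]; ring

lemma exp_int_mul (a : ℂ) (m : ℤ) :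
    IsTheta a 0 (exp (-(2 * Real.pi * m * a))) fun z => exp (2 * Real.pi * I * m * z) where
  differentiable := by fun_prop
  periodic z := by
    beta_reduce
    rw [mul_add, exp_add, mul_one, mul_comm (2 * Real.pi * I) (m : ℂ),
      exp_int_mul_two_pi_mul_I, mul_one]
  add_period z := by
    rw [pow_zero, mul_one, ← exp_add]
    congr 1
    linear_combination 2 * Real.pi * m * a * I_sq

lemma prod {ι : Type*} (s : Finset ι) {k : ι → ℕ} {c : ι → ℂ} {g : ι → ℂ → ℂ}
    (hg : ∀ i, IsTheta a (k i) (c i) (g i)) :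
    IsTheta a (∑ i ∈ s, k i) (∏ i ∈ s, c i) (∏ i ∈ s, g i) := by
  classical
  induction s using Finset.induction_on with
  | empty => simpa [Pi.one_def] using exp_int_mul a 0
  | insert i s hi ih => simpa only [Finset.sum_insert hi, Finset.prod_insert hi] using (hg i).mul ih

lemma comp_add_const (hg : IsTheta a k c g) (t : ℂ) :
    IsTheta a k (c * exp (-(2 * Real.pi * I * t)) ^ k) fun z => g (z + t) where
  differentiable := hg.differentiable.comp (by fun_prop)
  periodic := hg.periodic.add_const t
  add_period z := by
    rw [add_right_comm, hg.add_period, mul_add, neg_add, exp_add, mul_pow]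
    ring

lemma comp_neg (hg : IsTheta a k c g) (hcd : c * d = exp (2 * Real.pi * a) ^ k) :
    IsTheta a k d fun z => g (-z) where
  differentiable := hg.differentiable.comp (by fun_prop)
  periodic z := by simpa [neg_add_eq_sub] using hg.periodic.sub_eq (-z)
  add_period z := by
    have hexp : exp (-(2 * Real.pi * I * -(z + I * a))) * exp (2 * Real.pi * a) *
        exp (-(2 * Real.pi * I * z)) = 1 := by
      rw [← exp_add, ← exp_add, exp_eq_one_iff]
      exact ⟨0, by push_cast; linear_combination 2 * Real.pi * a * I_sq⟩
    have h := hg.add_period (-(z + I * a))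
    rw [show -(z + I * a) + I * a = -z by ring] at h
    have hexp_pow := congrArg (· ^ k) hexp
    simp only [mul_pow, one_pow] at hexp_pow
    rw [h]
    linear_combination -g (-(z + I * a)) * hexp_pow -
      exp (-(2 * Real.pi * I * -(z + I * a))) ^ k * exp (-(2 * Real.pi * I * z)) ^ k *
        g (-(z + I * a)) * hcd

lemma comp_two_mul (hg : IsTheta a k c g) :
    IsTheta a (4 * k) (c ^ 2 * exp (2 * Real.pi * a) ^ k) fun z => g (2 * z) where
  differentiable := hg.differentiable.comp (by fun_prop)
  periodic z := by
    simpa only [mul_add, mul_one, Nat.cast_ofNat] using hg.periodic.nat_mul 2 (2 * z)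
  add_period z := by
    have hexp : exp (-(2 * Real.pi * I * (2 * z + I * a))) * exp (-(2 * Real.pi * I * (2 * z))) =
        exp (2 * Real.pi * a) * exp (-(2 * Real.pi * I * z)) ^ 4 := by
      rw [← exp_nat_mul, ← exp_add, ← exp_add]
      congr 1
      push_cast
      linear_combination -2 * Real.pi * a * I_sq
    have hz : 2 * (z + I * a) = 2 * z + I * a + I * a := by ring
    rw [hz, hg.add_period, hg.add_period, pow_mul]
    linear_combination (exp := 1) c ^ 2 * g (2 * z) * congrArg (· ^ k) hexp

lemma apply_add_eq_zero_iff (hg : IsTheta a k c g) (ha : 0 < a.re) {w : ℂ}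
    (hw : w ∈ (periodPair a ha).lattice) (z : ℂ) : g (z + w) = 0 ↔ g z = 0 := by
  have h1 : Function.Periodic (g · = 0) 1 := fun z => by simp only [hg.periodic z]
  have h2 : Function.Periodic (g · = 0) (I * a) := fun z => by
    rcases eq_or_ne c 0 with rfl | hc
    · have hg0 (z : ℂ) : g z = 0 := by simpa using hg.add_period (z - I * a)
      simp only [hg0]
    · simp [hg.add_period, hc]
  obtain ⟨m, n, rfl⟩ := (mem_lattice_periodPair ha).1 hw
  simpa using (h1.int_mul m).add_period (h2.int_mul n) z

lemma apply_eq_zero_of_odd (hg : IsTheta a (2 * r) (exp (2 * Real.pi * a) ^ r) g)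
    (hodd : Function.Odd g) (ha : 0 < a.re) {z : ℂ} (hz : 2 * z ∈ (periodPair a ha).lattice) :
    g z = 0 := by
  obtain ⟨m, n, hmn⟩ := (mem_lattice_periodPair ha).1 hz
  obtain ⟨i, hn⟩ := n.even_or_odd'
  obtain ⟨w, rfl⟩ : ∃ w, z = w + i * (I * a) := ⟨z - i * (I * a), by ring⟩
  have hperiod : i * (I * a) ∈ (periodPair a ha).lattice := by
    simpa using Submodule.smul_mem _ i (I_mul_mem_lattice ha)
  rw [hg.apply_add_eq_zero_iff ha hperiod]
  rcases hn with rfl | rfl <;> push_cast at hmn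
  · have h := hg.periodic.int_mul m (-w)
    rw [mul_one, show -w + m = w by linear_combination hmn, hodd] at h
    exact self_eq_neg.1 h
  · have h := hg.periodic.int_mul m (-w)
    have h' := hg.add_period (-w + m)
    have hexp : exp (2 * Real.pi * a) * exp (-(2 * Real.pi * I * (-w + m))) ^ 2 = 1 := by
      rw [← exp_nat_mul, ← exp_add, exp_eq_one_iff]
      exact ⟨-m, by push_cast; linear_combination -2 * Real.pi * I * hmn + 2 * Real.pi * a * I_sq⟩
    rw [show -w + m + I * a = w by linear_combination hmn, pow_mul, ← mul_pow, hexp, one_pow,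
      one_mul] at h'
    rw [mul_one, ← h', hodd] at h
    exact self_eq_neg.1 h

lemma of_mul {E : ℂ → ℂ} (hE : IsTheta a j c E) (hE0 : E ≠ 0) (hc : c ≠ 0)
    (hg : Differentiable ℂ g) (hEg : IsTheta a (j + k) (c * d) (E * g)) : IsTheta a k d g where
  differentiable := hg
  periodic := by
    have h : E * (fun z => g (z + 1)) = E * g := funext fun z => by
      simpa [hE.periodic z] using hEg.periodic z
    exact congrFun <| mul_left_cancel_of_differentiable hE.differentiable hE0
      (hg.comp (by fun_prop)) hg h
  add_period := by
    have h : E * (fun z => g (z + I * a)) =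
        E * fun z => d * exp (-(2 * Real.pi * I * z)) ^ k * g z := funext fun z => by
      have hz := hEg.add_period z
      simp only [Pi.mul_apply, hE.add_period] at hz ⊢
      have hne : c * exp (-(2 * Real.pi * I * z)) ^ j ≠ 0 :=
        mul_ne_zero hc (pow_ne_zero _ (exp_ne_zero _))
      refine mul_left_cancel₀ hne ?_
      linear_combination hz
    exact congrFun <| mul_left_cancel_of_differentiable hE.differentiable hE0
      (hg.comp (by fun_prop)) (.mul (by fun_prop) hg) h

lemma exists_eq_mul {E N : ℂ → ℂ} (hE : IsTheta a j c E) (hN : IsTheta a (j + k) (c * d) N)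
    (hc : c ≠ 0) (hord : ∀ z, analyticOrderAt E z ≤ 1) (hzero : ∀ z, E z = 0 → N z = 0) :
    ∃ g, IsTheta a k d g ∧ N = E * g := by
  obtain ⟨g, hg, rfl⟩ := exists_differentiable_eq_mul_s13 hE.differentiable hN.differentiable
    fun z => analyticOrderAt_le_of_le_one (hE.differentiable.analyticAt z)
      (hN.differentiable.analyticAt z) (hord z) (hzero z)
  exact ⟨g, hE.of_mul (ne_zero_of_analyticOrderAt_le_one (hord 0)) hc hg hN, rfl⟩

lemma apply_eq_apply (hg : IsTheta a 0 1 g) (ha : 0 < a.re) (z w : ℂ) : g z = g w :=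
  apply_eq_apply_of_doubly_periodic ha hg.differentiable hg.periodic
    (fun z => by simpa using hg.add_period z) z w

end IsTheta

end ThetaFunctions

section ThetaR

variable {a : ℂ}

/-- The function `R_δ`, parametrized by `a = a_δ` instead of the nome `q_δ = exp(−πa_δ)`. -/
def thetaR (a z : ℂ) : ℂ := Rfun (exp (-(Real.pi : ℂ) * a)) z

lemma norm_nome_lt_one (ha : 0 < a.re) : ‖exp (-(Real.pi : ℂ) * a)‖ < 1 := by
  rw [norm_exp, Real.exp_lt_one_iff]
  simpa using mul_pos Real.pi_pos ha

lemma thetaR_eq_mul (ha : 0 < a.re) (z : ℂ) :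
    thetaR a z = oddPochhammer (exp (-(Real.pi : ℂ) * a)) (exp (2 * Real.pi * I * z)) *
      oddPochhammer (exp (-(Real.pi : ℂ) * a)) (exp (-(2 * Real.pi * I * z))) :=
  (multipliable_oddPochhammer (norm_nome_lt_one ha) _).tprod_mul
    (multipliable_oddPochhammer (norm_nome_lt_one ha) _)

lemma even_thetaR (a : ℂ) : Function.Even (thetaR a) := fun z => by
  simp only [thetaR, Rfun, mul_neg, neg_neg]
  exact tprod_congr fun k => mul_comm _ _

lemma periodic_thetaR (a : ℂ) : Function.Periodic (thetaR a) 1 := fun z => by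
  have hexp : exp (2 * Real.pi * I * (z + 1)) = exp (2 * Real.pi * I * z) := by
    rw [mul_add, mul_one, exp_add, exp_two_pi_mul_I, mul_one]
  simp only [thetaR, Rfun, exp_neg, hexp]

lemma thetaR_add_period (ha : 0 < a.re) (z : ℂ) :
    thetaR a (z + I * a) = -exp (Real.pi * a) * exp (-(2 * Real.pi * I * z)) * thetaR a z := by
  have hq1 := norm_nome_lt_one ha
  have hqinv : exp (Real.pi * a) = (exp (-(Real.pi : ℂ) * a))⁻¹ := by rw [← exp_neg]; congr 1; ring
  have hshift : exp (2 * Real.pi * I * (z + I * a)) =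
      exp (-(Real.pi : ℂ) * a) ^ 2 * exp (2 * Real.pi * I * z) := by
    rw [← exp_nat_mul, ← exp_add]
    congr 1
    push_cast
    linear_combination 2 * Real.pi * a * I_sq
  rw [thetaR_eq_mul ha, thetaR_eq_mul ha, exp_neg (2 * Real.pi * I * (z + I * a)),
    exp_neg (2 * Real.pi * I * z), hshift, hqinv]
  have hq0 : exp (-(Real.pi : ℂ) * a) ≠ 0 := exp_ne_zero _
  have hw0 : exp (2 * Real.pi * I * z) ≠ 0 := exp_ne_zero _
  generalize exp (-(Real.pi : ℂ) * a) = q at *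
  generalize exp (2 * Real.pi * I * z) = w at *
  have hcancel : q ^ 2 * (q ^ 2 * w)⁻¹ = w⁻¹ := by field_simp
  rw [oddPochhammer_eq_mul hq1 w, oddPochhammer_eq_mul hq1 (q ^ 2 * w)⁻¹, hcancel]
  field_simp
  ring

lemma differentiable_thetaR (ha : 0 < a.re) : Differentiable ℂ (thetaR a) := by
  have hP := differentiable_oddPochhammer (norm_nome_lt_one ha)
  simp_rw [funext (thetaR_eq_mul ha)]
  exact (hP.comp (by fun_prop)).mul (hP.comp (by fun_prop))

lemma isTheta_thetaR (ha : 0 < a.re) : IsTheta a 1 (-exp (Real.pi * a)) (thetaR a) where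
  differentiable := differentiable_thetaR ha
  periodic := periodic_thetaR a
  add_period z := by rw [thetaR_add_period ha, pow_one]

lemma analyticOrderAt_thetaR_le_one (ha : 0 < a.re) (z : ℂ) :
    analyticOrderAt (thetaR a) z ≤ 1 := by
  have hq1 := norm_nome_lt_one ha
  have hP := differentiable_oddPochhammer hq1
  have hfactor (s : ℂ) (hs : s ≠ 0) : analyticOrderAt
      (fun z => oddPochhammer (exp (-(Real.pi : ℂ) * a)) (exp (s * z))) z ≤ 1 := by
    refine (analyticOrderAt_comp_of_deriv_ne_zero (f := oddPochhammer _)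
      (g := fun z => exp (s * z)) (by fun_prop) ?_).trans_le
        (analyticOrderAt_oddPochhammer_le_one hq1 _)
    have hderiv : HasDerivAt (fun w => exp (s * w)) (exp (s * z) * s) z := by
      simpa using ((hasDerivAt_id z).const_mul s).cexp
    rw [hderiv.deriv]
    exact mul_ne_zero (exp_ne_zero _) hs
  rw [show thetaR a = fun z => _ from funext (thetaR_eq_mul ha)]
  refine analyticOrderAt_mul_le_one (Differentiable.analyticAt (hP.comp (by fun_prop)) z)
    (Differentiable.analyticAt (hP.comp (by fun_prop)) z)
    (hfactor _ two_pi_I_ne_zero) ?_ ?_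
  · simpa using hfactor (-(2 * Real.pi * I)) (neg_ne_zero.2 two_pi_I_ne_zero)
  · refine fun h => oddPochhammer_ne_zero hq1 ?_
    rw [exp_neg, norm_inv]
    exact inv_le_one_of_one_le₀ (le_of_not_ge fun hle => oddPochhammer_ne_zero hq1 hle h)

lemma sub_mem_lattice_of_oddPochhammer_exp_eq_zero (ha : 0 < a.re) {z : ℂ}
    (hz : oddPochhammer (exp (-(Real.pi : ℂ) * a)) (exp (2 * Real.pi * I * z)) = 0) :
    z - I * a / 2 ∈ (periodPair a ha).lattice := by
  obtain ⟨k, hk⟩ := exists_pow_mul_eq_one_of_oddPochhammer_eq_zero (norm_nome_lt_one ha) hz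
  rw [← exp_nat_mul, ← exp_add, exp_eq_one_iff] at hk
  obtain ⟨m, hm⟩ := hk
  refine (mem_lattice_periodPair ha).2 ⟨m, -k - 1, mul_left_cancel₀ two_pi_I_ne_zero ?_⟩
  push_cast at hm ⊢
  linear_combination -hm - Real.pi * a * (2 * k + 1) * I_sq

lemma sub_mem_lattice_of_thetaR_eq_zero (ha : 0 < a.re) {z : ℂ} (hz : thetaR a z = 0) :
    z - I * a / 2 ∈ (periodPair a ha).lattice := by
  rw [thetaR_eq_mul ha, mul_eq_zero] at hz
  rcases hz with hz | hz
  · exact sub_mem_lattice_of_oddPochhammer_exp_eq_zero ha hz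
  · rw [← mul_neg] at hz
    have h := add_mem (sub_mem_lattice_of_oddPochhammer_exp_eq_zero ha hz) (I_mul_mem_lattice ha)
    rw [show z - I * a / 2 = -(-z - I * a / 2 + I * a) by ring]
    exact neg_mem h

end ThetaR

section ThetaDen

variable {a : ℂ}

/-- `e^{−2πiz}` times the denominator of `f_δ(l;z)`, where `a = a_δ`. The exponential makes this
an odd function. -/
def thetaDen (a z : ℂ) : ℂ := exp (-(2 * Real.pi * I * z)) * thetaR a (2 * z - I * a / 2)

lemma odd_thetaDen (ha : 0 < a.re) : Function.Odd (thetaDen a) := fun z => by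
  have hexp : exp (-(2 * Real.pi * I * -z)) * exp (Real.pi * a) *
      exp (-(2 * Real.pi * I * (2 * z - I * a / 2))) = exp (-(2 * Real.pi * I * z)) := by
    rw [← exp_add, ← exp_add]
    congr 1
    linear_combination Real.pi * a * I_sq
  rw [thetaDen, thetaDen, show 2 * -z - I * a / 2 = -(2 * z - I * a / 2 + I * a) by ring,
    even_thetaR, thetaR_add_period ha]
  linear_combination -thetaR a (2 * z - I * a / 2) * hexp

lemma isTheta_thetaDen (ha : 0 < a.re) :
    IsTheta a 4 (exp (2 * Real.pi * a) ^ 2) (thetaDen a) := by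
  have h := (IsTheta.exp_int_mul a (-1)).mul
    ((isTheta_thetaR ha).comp_add_const (-(I * a / 2))).comp_two_mul
  convert h using 1
  · have hcancel : exp (Real.pi * a) * exp (-(2 * Real.pi * I * -(I * a / 2))) = 1 := by
      rw [← exp_add, exp_eq_one_iff]
      exact ⟨0, by push_cast; linear_combination Real.pi * a * I_sq⟩
    rw [pow_one, pow_one, neg_mul, hcancel]
    push_cast
    ring_nf
  · funext z
    simp [thetaDen, sub_eq_add_neg]

lemma analyticOrderAt_thetaDen_le_one (ha : 0 < a.re) (z : ℂ) :
    analyticOrderAt (thetaDen a) z ≤ 1 := by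
  have hR := differentiable_thetaR ha
  have hexp : analyticOrderAt (fun w => exp (-(2 * Real.pi * I * w))) z = 0 :=
    AnalyticAt.analyticOrderAt_eq_zero (by fun_prop) |>.2 (exp_ne_zero _)
  refine analyticOrderAt_mul_le_one (by fun_prop)
    (Differentiable.analyticAt (hR.comp (by fun_prop)) z) ?_ ?_ ?_
  · exact hexp.trans_le zero_le_one
  · exact (analyticOrderAt_comp_mul_add two_ne_zero (thetaR a) (-(I * a / 2)) z).trans_le
      (analyticOrderAt_thetaR_le_one ha _)
  · exact fun h => absurd h (exp_ne_zero _)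

lemma two_mul_mem_lattice_of_thetaDen_eq_zero (ha : 0 < a.re) {z : ℂ} (hz : thetaDen a z = 0) :
    2 * z ∈ (periodPair a ha).lattice := by
  have hR : thetaR a (2 * z - I * a / 2) = 0 := by simpa [thetaDen] using hz
  convert add_mem (sub_mem_lattice_of_thetaR_eq_zero ha hR) (I_mul_mem_lattice ha) using 1
  ring

lemma IsTheta.exists_antisymmetrization_eq_mul (ha : 0 < a.re) {r : ℕ} {U : ℂ → ℂ}
    (hU : IsTheta a (2 * (2 + r)) (exp (2 * Real.pi * a) ^ (2 + r)) U) :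
    ∃ g : ℂ → ℂ, IsTheta a (2 * r) (exp (2 * Real.pi * a) ^ r) g ∧ Function.Even g ∧
      ∀ z, U z - U (-z) = thetaDen a z * g z := by
  have hD := isTheta_thetaDen ha
  have hV : IsTheta a (2 * (2 + r)) (exp (2 * Real.pi * a) ^ (2 + r)) fun z => U z - U (-z) :=
    hU.sub (hU.comp_neg (by ring))
  have hVodd : Function.Odd fun z => U z - U (-z) := fun z => by simp
  obtain ⟨g, hg, hUg⟩ := hD.exists_eq_mul (k := 2 * r) (d := exp (2 * Real.pi * a) ^ r)
    (by convert hV using 1 <;> ring)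
    (pow_ne_zero 2 (exp_ne_zero _)) (analyticOrderAt_thetaDen_le_one ha) fun z hz =>
      hV.apply_eq_zero_of_odd hVodd ha (two_mul_mem_lattice_of_thetaDen_eq_zero ha hz)
  refine ⟨g, hg, ?_, congrFun hUg⟩
  have hgneg : thetaDen a * (fun z => g (-z)) = thetaDen a * g := funext fun z => by
    have h := congrFun hUg z
    have hneg := congrFun hUg (-z)
    simp only [Pi.mul_apply, neg_neg, odd_thetaDen ha z] at h hneg ⊢
    linear_combination h + hneg
  exact congrFun <| mul_left_cancel_of_differentiable hD.differentiable
    (ne_zero_of_analyticOrderAt_le_one (analyticOrderAt_thetaDen_le_one ha 0))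
    (hg.differentiable.comp differentiable_neg) hg.differentiable hgneg

end ThetaDen

section SpaceTheta1

variable {a : ℂ} {ap am : ℂ} {δ : Bool} {F : ℂ → ℂ}

/-- The function `z ↦ R_δ(z+y)R_δ(z−y)` with `a = a_δ`, a generator of `Θ_{1,δ}`. -/
def thetaProd (a y z : ℂ) : ℂ := thetaR a (z + y) * thetaR a (z - y)

lemma isTheta_thetaProd (ha : 0 < a.re) (y : ℂ) :
    IsTheta a 2 (exp (2 * Real.pi * a)) (thetaProd a y) := by
  have hR := isTheta_thetaR ha
  convert (hR.comp_add_const y).mul (hR.comp_add_const (-y)) using 1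
  · have hexp : exp (2 * Real.pi * a) = exp (Real.pi * a) ^ 2 := by
      rw [← exp_nat_mul]; congr 1; push_cast; ring
    have hcancel : exp (-(2 * Real.pi * I * y)) * exp (-(2 * Real.pi * I * -y)) = 1 := by
      rw [← exp_add, exp_eq_one_iff]
      exact ⟨0, by push_cast; ring⟩
    rw [hexp]
    linear_combination -exp (Real.pi * a) ^ 2 * hcancel
  · funext z
    simp [thetaProd, sub_eq_add_neg]

lemma even_thetaProd (a y : ℂ) : Function.Even (thetaProd a y) := fun z => by
  rw [thetaProd, thetaProd, ← even_thetaR a (z + y), ← even_thetaR a (z - y), neg_add', neg_sub',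
    sub_neg_eq_add, mul_comm]

lemma thetaProd_add_half (a y z : ℂ) :
    thetaR a (z + y + 1 / 2) * thetaR a (z - y + 1 / 2) = thetaProd a (y + 1 / 2) z := by
  rw [thetaProd, ← periodic_thetaR a (z - (y + 1 / 2)), ← add_assoc,
    show z - (y + 1 / 2) + 1 = z - y + 1 / 2 by ring]

lemma Theta1_eq_span (ap am : ℂ) (δ : Bool) :
    Theta1 ap am δ = Submodule.span ℂ (Set.range (thetaProd (aof ap am δ))) := by
  refine le_antisymm (Submodule.span_mono ?_) (Submodule.span_mono ?_)
  · rintro _ (⟨y, rfl⟩ | ⟨y, rfl⟩)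
    · exact ⟨y, rfl⟩
    · exact ⟨y + 1 / 2, funext fun z => (thetaProd_add_half _ y z).symm⟩
  · rintro _ ⟨y, rfl⟩
    exact Or.inl ⟨y, rfl⟩

lemma analyticOrderAt_thetaProd_quarter_le_one (ha : 0 < a.re) (z : ℂ) :
    analyticOrderAt (thetaProd a (1 / 4)) z ≤ 1 := by
  have hR := differentiable_thetaR ha
  have hshift (t : ℂ) : analyticOrderAt (fun w => thetaR a (w + t)) z ≤ 1 := by
    simpa only [one_mul] using (analyticOrderAt_comp_mul_add one_ne_zero (thetaR a) t z).trans_le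
      (analyticOrderAt_thetaR_le_one ha _)
  refine analyticOrderAt_mul_le_one (Differentiable.analyticAt (hR.comp (by fun_prop)) z)
    (Differentiable.analyticAt (hR.comp (by fun_prop)) z)
    (hshift (1 / 4)) (hshift (-(1 / 4))) fun h₁ h₂ => half_notMem_lattice ha ?_
  convert sub_mem (sub_mem_lattice_of_thetaR_eq_zero ha h₁)
    (sub_mem_lattice_of_thetaR_eq_zero ha h₂) using 1
  ring

lemma thetaProd_zero_ne_zero (ha : 0 < a.re) : thetaProd a 0 (1 / 4 + I * a / 2) ≠ 0 := by
  have hR : thetaR a (1 / 4 + I * a / 2) ≠ 0 := fun h =>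
    quarter_notMem_lattice ha (by simpa using sub_mem_lattice_of_thetaR_eq_zero ha h)
  simpa [thetaProd] using hR

lemma IsTheta.apply_eq_zero_of_thetaProd_quarter_eq_zero (ha : 0 < a.re) {k : ℕ} {c : ℂ}
    {g : ℂ → ℂ} (hg : IsTheta a k c g) (heven : Function.Even g)
    (hzero : g (1 / 4 + I * a / 2) = 0) {z : ℂ} (hz : thetaProd a (1 / 4) z = 0) : g z = 0 := by
  rcases mul_eq_zero.1 hz with h | h
  · have hmem := add_mem (sub_mem_lattice_of_thetaR_eq_zero ha h) (I_mul_mem_lattice ha)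
    have hneg : g (-(1 / 4 + I * a / 2)) = 0 := by rw [heven, hzero]
    rw [← hg.apply_add_eq_zero_iff ha hmem] at hneg
    convert hneg using 2
    ring
  · rw [← hg.apply_add_eq_zero_iff ha (sub_mem_lattice_of_thetaR_eq_zero ha h)] at hzero
    convert hzero using 2
    ring

lemma IsTheta.mem_span_thetaProd (ha : 0 < a.re) (hF : IsTheta a 2 (exp (2 * Real.pi * a)) F)
    (heven : Function.Even F) : F ∈ Submodule.span ℂ (Set.range (thetaProd a)) := by
  have hmem (y : ℂ) : thetaProd a y ∈ Submodule.span ℂ (Set.range (thetaProd a)) :=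
    Submodule.subset_span ⟨y, rfl⟩
  obtain ⟨x, hx⟩ : ∃ x : ℂ, (F - x • thetaProd a 0) (1 / 4 + I * a / 2) = 0 :=
    ⟨F (1 / 4 + I * a / 2) / thetaProd a 0 (1 / 4 + I * a / 2), by
      rw [Pi.sub_apply, Pi.smul_apply, smul_eq_mul,
        div_mul_cancel₀ _ (thetaProd_zero_ne_zero ha), sub_self]⟩
  have hN : IsTheta a 2 (exp (2 * Real.pi * a)) (F - x • thetaProd a 0) :=
    hF.sub ((isTheta_thetaProd ha 0).const_smul x)
  have hNeven : Function.Even (F - x • thetaProd a 0) := fun z => by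
    simp [heven z, even_thetaProd a 0 z]
  obtain ⟨g, hg, hNg⟩ := (isTheta_thetaProd ha (1 / 4)).exists_eq_mul (k := 0) (d := 1)
    (by rwa [mul_one]) (exp_ne_zero _) (analyticOrderAt_thetaProd_quarter_le_one ha)
    fun z => hN.apply_eq_zero_of_thetaProd_quarter_eq_zero ha hNeven hx
  have hF_eq : F = x • thetaProd a 0 + g 0 • thetaProd a (1 / 4) := funext fun z => by
    have h := congrFun hNg z
    rw [Pi.mul_apply, hg.apply_eq_apply ha z 0] at h
    simp only [Pi.sub_apply, Pi.smul_apply, Pi.add_apply, smul_eq_mul] at h ⊢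
    linear_combination h
  rw [hF_eq]
  exact add_mem (Submodule.smul_mem _ _ (hmem 0)) (Submodule.smul_mem _ _ (hmem (1 / 4)))

lemma mem_Theta1_iff (ha : 0 < (aof ap am δ).re) : F ∈ Theta1 ap am δ ↔
    IsTheta (aof ap am δ) 2 (exp (2 * Real.pi * aof ap am δ)) F ∧ Function.Even F := by
  rw [Theta1_eq_span]
  refine ⟨fun hF => ?_, fun hF => hF.1.mem_span_thetaProd ha hF.2⟩
  induction hF using Submodule.span_induction with
  | mem F hF =>
    obtain ⟨y, rfl⟩ := hF
    exact ⟨isTheta_thetaProd ha y, even_thetaProd _ y⟩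
  | zero =>
    exact ⟨by simpa using (isTheta_thetaProd ha 0).const_smul 0, fun _ => rfl⟩
  | add f g _ _ hf hg => exact ⟨hf.1.add hg.1, hf.2.add hg.2⟩
  | smul x f _ hf => exact ⟨hf.1.const_smul x, hf.2.const_smul x⟩

end SpaceTheta1

section DifferenceOperators

variable {a b : ℂ} {l : Fin 4 → ℂ} {F : ℂ → ℂ}

/-- `e^{−2πiz}` times the numerator of `f_δ(l;z)`, where `a = a_δ` and `b = a_{−δ}`. -/
def thetaNum (a b : ℂ) (l : Fin 4 → ℂ) (z : ℂ) : ℂ :=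
  exp (-(2 * Real.pi * I * z)) * ∏ n : Fin 4, thetaR a (z + l n + I * b / 4)

lemma isTheta_thetaNum (ha : 0 < a.re) (b : ℂ) (l : Fin 4 → ℂ) :
    IsTheta a 4 (exp (2 * Real.pi * a) ^ 2 *
      exp (-(2 * Real.pi * I) * ((∑ n, l n) + I * (a + b)))) (thetaNum a b l) := by
  have h := (IsTheta.exp_int_mul a (-1)).mul (IsTheta.prod Finset.univ
    fun n => (isTheta_thetaR ha).comp_add_const (l n + I * b / 4))
  convert h using 1
  · simp
  · simp only [pow_one, Fin.prod_univ_four, Fin.sum_univ_four, neg_mul, mul_neg, neg_neg,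
      ← exp_add, ← exp_nat_mul]
    congr 1
    push_cast
    linear_combination -2 * Real.pi * a * I_sq
  · funext z
    simp [thetaNum, add_assoc]

lemma fδ_eq_div (ap am : ℂ) (δ : Bool) (l : Fin 4 → ℂ) (z : ℂ) :
    fδ ap am δ l z =
      thetaNum (aof ap am δ) (aof ap am (!δ)) l z / thetaDen (aof ap am δ) z := by
  rw [thetaNum, thetaDen, mul_div_mul_left _ _ (exp_ne_zero _)]
  rfl

lemma fδ_mul_add_fδ_mul_eq_div {ap am : ℂ} {δ : Bool} (ha : 0 < (aof ap am δ).re)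
    (l : Fin 4 → ℂ) (hF : Function.Even F) (z : ℂ) :
    fδ ap am δ l z * F (z + I * aof ap am (!δ) / 2) +
      fδ ap am δ l (-z) * F (z - I * aof ap am (!δ) / 2) =
    (thetaNum (aof ap am δ) (aof ap am (!δ)) l z * F (z + I * aof ap am (!δ) / 2) -
      thetaNum (aof ap am δ) (aof ap am (!δ)) l (-z) * F (-z + I * aof ap am (!δ) / 2)) /
      thetaDen (aof ap am δ) z := by
  rw [fδ_eq_div, fδ_eq_div, odd_thetaDen ha, ← hF (z - I * aof ap am (!δ) / 2), neg_sub, div_neg,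
    sub_eq_neg_add (I * aof ap am (!δ) / 2) z]
  ring

lemma exists_isTheta_thetaNum_antisymmetrization (ha : 0 < a.re)
    (hF : IsTheta a 2 (exp (2 * Real.pi * a)) F)
    (hμ : exp (-(2 * Real.pi * I) * ((∑ n, l n) + I * (a + b))) = exp (-(2 * Real.pi) * b)) :
    ∃ g, IsTheta a 2 (exp (2 * Real.pi * a)) g ∧ Function.Even g ∧ ∀ z,
      thetaNum a b l z * F (z + I * b / 2) - thetaNum a b l (-z) * F (-z + I * b / 2) =
        thetaDen a z * g z := by
  have hcancel : exp (-(2 * Real.pi) * b) * exp (-(2 * Real.pi * I * (I * b / 2))) ^ 2 = 1 := by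
    rw [← exp_nat_mul, ← exp_add, exp_eq_one_iff]
    exact ⟨0, by push_cast; linear_combination -2 * Real.pi * b * I_sq⟩
  have hU := (isTheta_thetaNum ha b l).mul (hF.comp_add_const (I * b / 2))
  rw [hμ, show exp (2 * Real.pi * a) ^ 2 * exp (-(2 * Real.pi) * b) * (exp (2 * Real.pi * a) *
    exp (-(2 * Real.pi * I * (I * b / 2))) ^ 2) = exp (2 * Real.pi * a) ^ (2 + 1) by
      linear_combination exp (2 * Real.pi * a) ^ 3 * hcancel] at hU
  simpa using hU.exists_antisymmetrization_eq_mul (r := 1) ha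

lemma isTheta_exp_mul_comp_add_half_period (hF : IsTheta b 2 (exp (2 * Real.pi * b)) F) :
    IsTheta b 2 (exp (2 * Real.pi * b)) fun z => exp (2 * Real.pi * I * z) * F (z + I * b / 2) := by
  convert (IsTheta.exp_int_mul b 1).mul (hF.comp_add_const (I * b / 2)) using 1
  · rw [← exp_nat_mul, ← exp_add, ← exp_add]
    congr 1
    push_cast
    linear_combination 2 * Real.pi * b * I_sq
  · funext z
    simp

lemma even_exp_mul_comp_add_half_period (hF : IsTheta b 2 (exp (2 * Real.pi * b)) F)
    (heven : Function.Even F) :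
    Function.Even fun z => exp (2 * Real.pi * I * z) * F (z + I * b / 2) := fun z => by
  have h := hF.add_period (-z - I * b / 2)
  rw [show -z - I * b / 2 + I * b = -z + I * b / 2 by ring, ← neg_add', heven, ← exp_nat_mul,
    ← exp_add] at h
  beta_reduce
  rw [h, ← mul_assoc, ← exp_add]
  congr 2
  push_cast
  linear_combination 2 * Real.pi * b * I_sq

lemma exists_const_thetaNum_antisymmetrization (ha : 0 < a.re)
    (hμ : exp (-(2 * Real.pi * I) * ((∑ n, l n) + I * (a + b))) = exp (-(2 * Real.pi) * a)) :
    ∃ x : ℂ, ∀ z, thetaNum a b l z * exp (-(2 * Real.pi * I * z)) -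
      thetaNum a b l (-z) * exp (2 * Real.pi * I * z) = thetaDen a z * x := by
  have hU := (isTheta_thetaNum ha b l).mul (IsTheta.exp_int_mul a (-1))
  rw [hμ] at hU
  have hcancel : exp (-(2 * Real.pi) * a) * exp (-(2 * Real.pi * (-1 : ℤ) * a)) = 1 := by
    rw [← exp_add, exp_eq_one_iff]
    exact ⟨0, by push_cast; ring⟩
  rw [mul_assoc, hcancel, mul_one] at hU
  obtain ⟨g, hg, -, h⟩ := hU.exists_antisymmetrization_eq_mul (r := 0) ha
  rw [pow_zero] at hg
  refine ⟨g 0, fun z => ?_⟩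
  rw [← hg.apply_eq_apply ha z 0, ← h z]
  simp

lemma exists_isTheta_thetaNum_antisymmetrization_dual (ha : 0 < a.re)
    (hF : IsTheta b 2 (exp (2 * Real.pi * b)) F) (heven : Function.Even F)
    (hμ : exp (-(2 * Real.pi * I) * ((∑ n, l n) + I * (a + b))) = exp (-(2 * Real.pi) * a)) :
    ∃ g, IsTheta b 2 (exp (2 * Real.pi * b)) g ∧ Function.Even g ∧ ∀ z,
      thetaNum a b l z * F (z + I * b / 2) - thetaNum a b l (-z) * F (-z + I * b / 2) =
        thetaDen a z * g z := by
  obtain ⟨x, hx⟩ := exists_const_thetaNum_antisymmetrization ha hμ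
  have hH := even_exp_mul_comp_add_half_period hF heven
  refine ⟨_, (isTheta_exp_mul_comp_add_half_period hF).const_smul x, hH.const_smul x, fun z => ?_⟩
  have hz := hH z
  have hinv : exp (2 * Real.pi * I * z) * exp (-(2 * Real.pi * I * z)) = 1 := by
    rw [← exp_add, add_neg_cancel, exp_zero]
  simp only [mul_neg, Pi.smul_apply, smul_eq_mul] at hz ⊢
  linear_combination exp (2 * Real.pi * I * z) * F (z + I * b / 2) * hx z -
    thetaNum a b l z * F (z + I * b / 2) * hinv +
    thetaNum a b l (-z) * F (-z + I * b / 2) * hinv -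
    thetaNum a b l (-z) * exp (2 * Real.pi * I * z) * hz

end DifferenceOperators

/-- for `μ = exp(−2πa_{−δ})`, the operators `A_{R,δ′}(l)` of both Sklyanin
algebras map the two-dimensional theta space `Θ_{1,δ}` into itself (the image of
`F ∈ Θ_{1,δ}` agrees with an element of `Θ_{1,δ}` away from the zeros of the
denominators `R_{δ′}(±2z−ia_{δ′}/2)`). -/
theorem statement13 (ap am : ℂ) (hap : 0 < ap.re) (ham : 0 < am.re) (δ : Bool)
    (l : Fin 4 → ℂ)
    (hμ : Complex.exp (-(2 * Real.pi * I) * ((∑ n, l n) + 2 * I * ((ap + am) / 2))) =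
      Complex.exp (-(2 * Real.pi) * aof ap am (!δ))) :
    ∀ δ' : Bool, ∀ F : ℂ → ℂ, F ∈ Theta1 ap am δ →
      ∃ g ∈ Theta1 ap am δ, ∀ z : ℂ,
        Rfun (Complex.exp (-(Real.pi : ℂ) * aof ap am δ')) (2 * z - I * aof ap am δ' / 2) ≠ 0 →
        Rfun (Complex.exp (-(Real.pi : ℂ) * aof ap am δ')) (-(2 * z) - I * aof ap am δ' / 2) ≠ 0 →
        fδ ap am δ' l z * F (z + I * aof ap am (!δ') / 2) +
          fδ ap am δ' l (-z) * F (z - I * aof ap am (!δ') / 2) = g z := by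
  intro δ' F hF
  have hre (ε : Bool) : 0 < (aof ap am ε).re := by cases ε <;> assumption
  obtain ⟨hFtheta, hFeven⟩ := (mem_Theta1_iff (hre δ)).1 hF
  have hsum : 2 * I * ((ap + am) / 2) = I * (aof ap am δ' + aof ap am (!δ')) := by
    cases δ' <;> simp only [aof, Bool.not_true, Bool.not_false, if_true, if_false,
      Bool.false_eq_true] <;> ring
  rw [hsum] at hμ
  obtain ⟨g, hg, hgeven, h⟩ : ∃ g, IsTheta (aof ap am δ) 2 (exp (2 * Real.pi * aof ap am δ)) g ∧
      Function.Even g ∧ ∀ z,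
      thetaNum (aof ap am δ') (aof ap am (!δ')) l z * F (z + I * aof ap am (!δ') / 2) -
        thetaNum (aof ap am δ') (aof ap am (!δ')) l (-z) * F (-z + I * aof ap am (!δ') / 2) =
        thetaDen (aof ap am δ') z * g z := by
    obtain rfl | rfl : δ = δ' ∨ δ = !δ' := by cases δ <;> cases δ' <;> simp
    · exact exists_isTheta_thetaNum_antisymmetrization (hre δ) hFtheta hμ
    · rw [Bool.not_not] at hμ
      exact exists_isTheta_thetaNum_antisymmetrization_dual (hre δ') hFtheta hFeven hμ
  refine ⟨g, (mem_Theta1_iff (hre δ)).2 ⟨hg, hgeven⟩, fun z hz _ => ?_⟩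
  rw [fδ_mul_add_fδ_mul_eq_div (hre δ') l hFeven, h]
  exact mul_div_cancel_left₀ _ (mul_ne_zero (exp_ne_zero _) hz)
end
end
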